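/- Let n ≥ 5 be a natural number. The genus-zero Hurwitz number h_{1^1 2^1} with one degenerate branch point of reduced ramification type 1^1 2^1 (i.e., one permutation of cycle type (3,2,1^{n-5})) and m = 2n−5 simple branch points satisfies h_{1^1 2^1} = 9·((2n−5)!/(n−5)!)·n^{n−6}. -/

import Mathlib

open Equiv

namespace HZ

theorem fd {ι : Type*} [DecidableEq ι] (l : ι → ℚ) (K : Finset ι) :
    ∀ d < K.card, ∀ x : ℚ,
      ∑ I ∈ K.powerset, (-1 : ℚ) ^ I.card * (x + ∑ i ∈ I, l i) ^ d = 0 := by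
  induction K using Finset.induction_on with
  | empty => intro d hd; simp at hd
  | insert i K hi ih =>
    intro d hd x
    rw [Finset.card_insert_of_notMem hi] at hd
    rw [Finset.sum_powerset_insert hi]
    have h1 : ∀ I ∈ K.powerset, (-1 : ℚ) ^ (insert i I).card * (x + ∑ j ∈ insert i I, l j) ^ d
        = - ∑ e ∈ Finset.range (d + 1), (-1 : ℚ) ^ I.card * (x + ∑ j ∈ I, l j) ^ e
            * (l i ^ (d - e) * (d.choose e)) := by
      intro I hI
      have hiI : i ∉ I := fun h => hi (Finset.mem_powerset.1 hI h)
      rw [Finset.card_insert_of_notMem hiI, Finset.sum_insert hiI,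
        show x + (l i + ∑ j ∈ I, l j) = (x + ∑ j ∈ I, l j) + l i by ring, add_pow,
        Finset.mul_sum, ← Finset.sum_neg_distrib]
      refine Finset.sum_congr rfl fun e _ => ?_
      ring
    rw [Finset.sum_congr rfl h1, Finset.sum_neg_distrib, Finset.sum_comm, Finset.sum_range_succ]
    have h2 : ∑ e ∈ Finset.range d, ∑ I ∈ K.powerset, (-1 : ℚ) ^ I.card * (x + ∑ j ∈ I, l j) ^ e
            * (l i ^ (d - e) * (d.choose e)) = 0 := by
      refine Finset.sum_eq_zero fun e he => ?_
      rw [← Finset.sum_mul, ih e (by simp at he; omega) x, zero_mul]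
    rw [h2]
    simp

/-- reorganising a sum over a subset and a point of its complement -/
theorem sum_pt {ι R : Type*} [DecidableEq ι] [CommRing R] (K : Finset ι) (F : Finset ι → ι → R) :
    ∑ I ∈ K.powerset, ∑ j ∈ K \ I, F I j = ∑ j ∈ K, ∑ I ∈ (K.erase j).powerset, F I j := by
  refine Finset.sum_comm' ?_
  intro I j
  simp only [Finset.mem_powerset, Finset.mem_sdiff, Finset.subset_erase]
  tauto

/-- Hurwitz basic function -/
noncomputable def hh {ι : Type*} (l : ι → ℚ) (x : ℚ) (I : Finset ι) : ℚ :=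
  x * (x + ∑ i ∈ I, l i) ^ ((I.card : ℤ) - 1)

open Polynomial in
theorem H1p {ι : Type*} [DecidableEq ι] (l : ι → ℚ) (hl : ∀ i, 0 ≤ l i) (x : ℚ) (hx : 0 < x) :
    ∀ (k : ℕ) (K : Finset ι), K.card = k → ∀ y : ℚ[X],
    ∑ I ∈ K.powerset, C (hh l x I) * (y + C (∑ j ∈ K \ I, l j)) ^ (K \ I).card
      = (y + C (x + ∑ i ∈ K, l i)) ^ K.card := by
  intro k
  induction k with
  | zero =>
    intro K hK y
    rw [Finset.card_eq_zero] at hK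
    subst hK
    simp only [Finset.powerset_empty, Finset.sum_singleton, Finset.sdiff_self, Finset.card_empty, hh,
      Finset.sum_empty, add_zero, pow_zero, mul_one]
    rw [← Polynomial.C_1]
    congr 1
    simp [hx.ne']
  | succ k ih =>
    intro K hK y
    set p : ℚ[X] := ∑ I ∈ K.powerset, C (hh l x I) * (X + C (∑ j ∈ K \ I, l j)) ^ (K \ I).card
      - (X + C (x + ∑ i ∈ K, l i)) ^ K.card with hp
    have hd : derivative p = 0 := by
      rw [hp, derivative_sub, derivative_sum]
      have h1 : ∀ I ∈ K.powerset,
          derivative (C (hh l x I) * (X + C (∑ j ∈ K \ I, l j)) ^ (K \ I).card)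
          = ∑ j ∈ K \ I, C (hh l x I) * ((X + C (l j)) +
              C (∑ j ∈ (K.erase j) \ I, l j)) ^ ((K.erase j) \ I).card := by
        intro I hI
        rw [derivative_C_mul, derivative_pow, derivative_X_add_C, mul_one]
        rw [← Finset.mul_sum]
        congr 1
        have h0 : ∀ j ∈ K \ I, ((X + C (l j)) +
              C (∑ j ∈ (K.erase j) \ I, l j)) ^ ((K.erase j) \ I).card
            = (X + C (∑ j ∈ K \ I, l j)) ^ ((K \ I).card - 1) := by
          intro j hj
          rw [Finset.erase_sdiff_comm, Finset.card_erase_of_mem hj, add_assoc, ← C_add,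
            Finset.add_sum_erase _ _ hj]
        rw [Finset.sum_congr rfl h0, Finset.sum_const, nsmul_eq_mul, C_eq_natCast]
      rw [Finset.sum_congr rfl h1, sum_pt]
      have h2 : ∀ j ∈ K, ∑ I ∈ (K.erase j).powerset, C (hh l x I) * ((X + C (l j)) +
              C (∑ j ∈ (K.erase j) \ I, l j)) ^ ((K.erase j) \ I).card
            = (X + C (x + ∑ i ∈ K, l i)) ^ k := by
        intro j hj
        have hc : (K.erase j).card = k := by rw [Finset.card_erase_of_mem hj]; omega
        rw [ih _ hc, hc, add_assoc, ← C_add, ← Finset.add_sum_erase _ _ hj]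
        congr 3; ring
      rw [Finset.sum_congr rfl h2, derivative_pow, derivative_X_add_C]
      simp [hK]
    have hz : p.eval (-(x + ∑ i ∈ K, l i)) = 0 := by
      rw [hp]
      simp only [eval_sub, eval_finsetSum, eval_mul, eval_C, eval_pow, eval_add, eval_X]
      have h1 : ∀ I ∈ K.powerset, hh l x I * (-(x + ∑ i ∈ K, l i) + ∑ j ∈ K \ I, l j) ^ (K \ I).card
        = (-1)^(k+1) * x * ((-1 : ℚ) ^ I.card * (x + ∑ i ∈ I, l i) ^ k) := by
        intro I hI
        rw [Finset.mem_powerset] at hI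
        have hpos : 0 < x + ∑ i ∈ I, l i :=
          add_pos_of_pos_of_nonneg hx (Finset.sum_nonneg fun i _ => hl i)
        rw [← Finset.sum_sdiff hI]
        have hcard : (K \ I).card + I.card = k + 1 := by
          rw [Finset.card_sdiff_add_card_eq_card hI, hK]
        rw [show -(x + (∑ x ∈ K \ I, l x + ∑ x ∈ I, l x)) + ∑ j ∈ K \ I, l j
          = (-1) * (x + ∑ x ∈ I, l x) by ring, mul_pow, hh]
        have e1 : (x + ∑ i ∈ I, l i) ^ k =
          (x + ∑ i ∈ I, l i) ^ ((I.card : ℤ) - 1) * (x + ∑ x ∈ I, l x) ^ (K \ I).card := by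
          rw [← zpow_natCast, ← zpow_natCast, ← zpow_add₀ hpos.ne']
          congr 1; omega
        have e2 : (-1 : ℚ) ^ (K \ I).card = (-1)^(k+1) * (-1)^I.card := by
          rw [← hcard, pow_add, mul_assoc, ← mul_pow]; simp
        rw [e1, e2]; ring
      rw [Finset.sum_congr rfl h1, ← Finset.mul_sum, fd l K k (by omega) x]
      simp [hK]
    have hp0 : p = 0 := by
      have := derivative_eq_zero.1 hd
      rw [eq_C_of_natDegree_eq_zero this] at hz ⊢
      simpa using hz
    have h := congrArg (aeval y) hp0
    rw [← sub_eq_zero]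
    simp only [hp, map_sub, map_sum, map_mul, map_pow, map_add, aeval_X, aeval_C, map_zero,
      Polynomial.algebraMap_eq] at h ⊢
    exact h

theorem H1 {ι : Type*} [DecidableEq ι] (l : ι → ℚ) (hl : ∀ i, 0 ≤ l i) (x : ℚ) (hx : 0 < x)
    (K : Finset ι) (y : ℚ) :
    ∑ I ∈ K.powerset, hh l x I * (y + ∑ j ∈ K \ I, l j) ^ (K \ I).card
      = (y + (x + ∑ i ∈ K, l i)) ^ K.card := by
  have := congrArg (Polynomial.eval 0) (H1p l hl x hx _ K rfl (Polynomial.C y))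
  simpa [Polynomial.eval_finsetSum] using this

theorem H2 {ι : Type*} [DecidableEq ι] (l : ι → ℚ) (hl : ∀ i, 0 ≤ l i) (x : ℚ) (hx : 0 < x)
    (K : Finset ι) (y : ℚ) (hy : 0 < y) :
    ∑ I ∈ K.powerset, hh l x I * hh l y (K \ I) = hh l (x + y) K := by
  have h1 : ∀ I ∈ K.powerset, hh l x I * hh l y (K \ I)
      = hh l x I * (y + ∑ j ∈ K \ I, l j) ^ (K \ I).card - ∑ j ∈ K \ I,
        l j * (hh l x I * ((y + l j) + ∑ j ∈ (K.erase j) \ I, l j) ^ ((K.erase j) \ I).card) := by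
    intro I hI
    have hpos : 0 < y + ∑ i ∈ K \ I, l i :=
          add_pos_of_pos_of_nonneg hy (Finset.sum_nonneg fun i _ => hl i)
    have h2 : ∀ j ∈ K \ I,
       l j * (hh l x I * ((y + l j) + ∑ j ∈ (K.erase j) \ I, l j) ^ ((K.erase j) \ I).card)
       = l j * (hh l x I * (y + ∑ i ∈ K \ I, l i) ^ (((K \ I).card : ℤ) - 1)) := by
      intro j hj
      rw [Finset.erase_sdiff_comm, Finset.card_erase_of_mem hj, add_assoc, 
            Finset.add_sum_erase _ _ hj, ← zpow_natCast]
      have := Finset.card_pos.2 ⟨j, hj⟩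
      congr 3; omega
    rw [Finset.sum_congr rfl h2, ← Finset.sum_mul]
    have e : (y + ∑ i ∈ K \ I, l i) ^ (K \ I).card = (y + ∑ i ∈ K \ I, l i) ^ (((K \ I).card : ℤ) - 1)
      * (y + ∑ i ∈ K \ I, l i) := by
      rw [← zpow_natCast, ← zpow_add_one₀ hpos.ne']; congr 1; ring
    have e2 : hh l y (K \ I) = y * (y + ∑ i ∈ K \ I, l i) ^ (((K \ I).card : ℤ) - 1) := rfl
    rw [e, e2]
    ring
  rw [Finset.sum_congr rfl h1, Finset.sum_sub_distrib, sum_pt, H1 l hl x hx]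
  have h3 : ∀ j ∈ K, ∑ I ∈ (K.erase j).powerset,
     l j * (hh l x I * ((y + l j) + ∑ j ∈ (K.erase j) \ I, l j) ^ ((K.erase j) \ I).card)
     = l j * (x + y + ∑ i ∈ K, l i) ^ ((K.card : ℤ) - 1) := by
    intro j hj
    rw [← Finset.mul_sum, H1 l hl x hx, Finset.card_erase_of_mem hj, ← Finset.add_sum_erase _ _ hj,
      ← zpow_natCast]
    have := Finset.card_pos.2 ⟨j, hj⟩
    congr 2
    · ring
    · omega
  have hpos : 0 < x + y + ∑ i ∈ K, l i :=
          add_pos_of_pos_of_nonneg (by positivity) (Finset.sum_nonneg fun i _ => hl i)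
  have e : (x + y + ∑ i ∈ K, l i) ^ K.card = (x + y + ∑ i ∈ K, l i) ^ ((K.card : ℤ) - 1)
      * (x + y + ∑ i ∈ K, l i) := by
      rw [← zpow_natCast, ← zpow_add_one₀ hpos.ne']; congr 1; ring
  rw [Finset.sum_congr rfl h3, ← Finset.sum_mul, show y + (x + ∑ i ∈ K, l i) = x + y + ∑ i ∈ K, l i by ring,
    e, hh]
  ring

/-- mixed sum -/
theorem H3 {ι : Type*} [DecidableEq ι] (l : ι → ℚ) (hl : ∀ i, 0 ≤ l i) (x : ℚ) (hx : 0 < x)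
    (K : Finset ι) (y : ℚ) (hy : 0 < y) :
    ∑ I ∈ K.powerset, hh l x I * (y + ∑ j ∈ K \ I, l j) ^ (((K \ I).card : ℤ) - 2) =
      (x + y) / y ^ 2 * (x + y + ∑ i ∈ K, l i) ^ ((K.card : ℤ) - 1) -
      1 / y * (∑ j ∈ K, l j * (x + y + l j) / (y + l j)) *
        (x + y + ∑ i ∈ K, l i) ^ ((K.card : ℤ) - 2) := by
  have h1 : ∀ I ∈ K.powerset, hh l x I * (y + ∑ j ∈ K \ I, l j) ^ (((K \ I).card : ℤ) - 2)
      = 1 / y ^ 2 * (hh l x I * hh l y (K \ I)) - ∑ j ∈ K \ I,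
        (1 / y * (l j / (y + l j))) * (hh l x I * hh l (y + l j) ((K.erase j) \ I)) := by
    intro I hI
    have hpos : 0 < y + ∑ i ∈ K \ I, l i :=
          add_pos_of_pos_of_nonneg hy (Finset.sum_nonneg fun i _ => hl i)
    have h2 : ∀ j ∈ K \ I,
       (1 / y * (l j / (y + l j))) * (hh l x I * hh l (y + l j) ((K.erase j) \ I))
       = l j * (1 / y * (hh l x I * (y + ∑ i ∈ K \ I, l i) ^ (((K \ I).card : ℤ) - 2))) := by
      intro j hj
      have := Finset.card_pos.2 ⟨j, hj⟩
      have hlj := hl j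
      have hne : y + l j ≠ 0 := by positivity
      nth_rewrite 2 [hh]
      rw [Finset.erase_sdiff_comm, Finset.card_erase_of_mem hj, add_assoc, 
            Finset.add_sum_erase _ _ hj, show (((K \ I).card - 1 : ℕ) : ℤ) - 1 = ((K \ I).card : ℤ) - 2 by omega]
      field_simp
    rw [Finset.sum_congr rfl h2, ← Finset.sum_mul]
    have e : (y + ∑ i ∈ K \ I, l i) ^ (((K \ I).card : ℤ) - 1) = (y + ∑ i ∈ K \ I, l i) ^ (((K \ I).card : ℤ) - 2)
      * (y + ∑ i ∈ K \ I, l i) := by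
      rw [← zpow_add_one₀ hpos.ne']; congr 1; ring
    have : hh l y (K \ I) = y * ((y + ∑ i ∈ K \ I, l i) ^ (((K \ I).card : ℤ) - 2)
      * (y + ∑ i ∈ K \ I, l i)) := by rw [hh, e]
    rw [this]
    field_simp
    ring
  rw [Finset.sum_congr rfl h1, Finset.sum_sub_distrib, sum_pt, ← Finset.mul_sum, H2 l hl x hx K y hy]
  have h3 : ∀ j ∈ K, ∑ I ∈ (K.erase j).powerset,
     (1 / y * (l j / (y + l j))) * (hh l x I * hh l (y + l j) ((K.erase j) \ I))
     = 1 / y * (l j * (x + y + l j) / (y + l j)) * (x + y + ∑ i ∈ K, l i) ^ ((K.card : ℤ) - 2) := by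
    intro j hj
    have hlj := hl j
    have := Finset.card_pos.2 ⟨j, hj⟩
    rw [← Finset.mul_sum, H2 l hl x hx _ _ (by positivity), hh, Finset.card_erase_of_mem hj, ← Finset.add_sum_erase _ _ hj,
      show ((K.card - 1 : ℕ) : ℤ) - 1 = (K.card : ℤ) - 2 by omega,
      show x + (y + l j) + ∑ x ∈ K.erase j, l x = x + y + (l j + ∑ x ∈ K.erase j, l x) by ring]
    field_simp
    ring
  rw [Finset.sum_congr rfl h3, ← Finset.sum_mul, ← Finset.mul_sum, hh]
  ring

/-- The splitting sum. -/
noncomputable def SS {ι : Type*} [DecidableEq ι] (l : ι → ℚ) (K : Finset ι) (x y : ℚ) : ℚ :=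
  ∑ I ∈ K.powerset, (x + ∑ j ∈ I, l j) ^ ((I.card : ℤ) - 2) *
    (y + ∑ j ∈ K \ I, l j) ^ (((K \ I).card : ℤ) - 2)

theorem SS_eq {ι : Type*} [DecidableEq ι] (l : ι → ℚ) (hl : ∀ i, 0 ≤ l i) (x : ℚ) (hx : 0 < x)
    (K : Finset ι) (y : ℚ) (hy : 0 < y) :
    SS l K x y = (x + y + ∑ i ∈ K, l i) ^ ((K.card : ℤ) - 3) / (x * y) *
      ((x + y + ∑ i ∈ K, l i) * (x + y) ^ 2 / (x * y)
       - ∑ j ∈ K, l j * (x + y + l j) * (1 / (x + l j) + 1 / (y + l j))) := by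
  have hpos : 0 < x + y + ∑ i ∈ K, l i :=
          add_pos_of_pos_of_nonneg (by positivity) (Finset.sum_nonneg fun i _ => hl i)
  have h1 : (x + y + ∑ i ∈ K, l i) * SS l K x y
      = 1 / x * (∑ I ∈ K.powerset, hh l x I * (y + ∑ j ∈ K \ I, l j) ^ (((K \ I).card : ℤ) - 2))
       + 1 / y * (∑ I ∈ K.powerset, hh l y I * (x + ∑ j ∈ K \ I, l j) ^ (((K \ I).card : ℤ) - 2)) := by
    have hsw : (∑ I ∈ K.powerset, hh l y I * (x + ∑ j ∈ K \ I, l j) ^ (((K \ I).card : ℤ) - 2))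
      = ∑ I ∈ K.powerset, hh l y (K \ I) * (x + ∑ j ∈ I, l j) ^ ((I.card : ℤ) - 2) := by
      refine Finset.sum_bij' (fun I _ => K \ I) (fun I _ => K \ I) ?_ ?_ ?_ ?_ ?_ <;>
        simp +contextual [Finset.sdiff_subset]
    rw [hsw, SS, Finset.mul_sum, Finset.mul_sum, Finset.mul_sum, ← Finset.sum_add_distrib]
    refine Finset.sum_congr rfl fun I hI => ?_
    rw [Finset.mem_powerset] at hI
    have hp1 : 0 < y + ∑ i ∈ K \ I, l i :=
          add_pos_of_pos_of_nonneg hy (Finset.sum_nonneg fun i _ => hl i)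
    have hp2 : 0 < x + ∑ i ∈ I, l i :=
          add_pos_of_pos_of_nonneg hx (Finset.sum_nonneg fun i _ => hl i)
    have e1 : (y + ∑ i ∈ K \ I, l i) ^ (((K \ I).card : ℤ) - 1) = (y + ∑ i ∈ K \ I, l i) ^ (((K \ I).card : ℤ) - 2)
      * (y + ∑ i ∈ K \ I, l i) := by
      rw [← zpow_add_one₀ hp1.ne']; congr 1; ring
    have e2 : (x + ∑ i ∈ I, l i) ^ ((I.card : ℤ) - 1) = (x + ∑ i ∈ I, l i) ^ ((I.card : ℤ) - 2)
      * (x + ∑ i ∈ I, l i) := by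
      rw [← zpow_add_one₀ hp2.ne']; congr 1; ring
    rw [hh, hh, e1, e2, ← Finset.sum_sdiff hI]
    field_simp
    ring
  rw [H3 l hl x hx K y hy, H3 l hl y hy K x hx] at h1
  have e1 : (x + y + ∑ i ∈ K, l i) ^ ((K.card : ℤ) - 1) =
    (x + y + ∑ i ∈ K, l i) ^ ((K.card : ℤ) - 3) * (x + y + ∑ i ∈ K, l i) ^ 2 := by
    rw [← zpow_natCast, ← zpow_add₀ hpos.ne']; congr 1; push_cast; ring
  have e2 : (x + y + ∑ i ∈ K, l i) ^ ((K.card : ℤ) - 2) =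
    (x + y + ∑ i ∈ K, l i) ^ ((K.card : ℤ) - 3) * (x + y + ∑ i ∈ K, l i) := by
    rw [← zpow_add_one₀ hpos.ne']; congr 1; ring
  rw [add_comm y x, e1, e2] at h1
  have e3 : ∑ j ∈ K, l j * (x + y + l j) * (1 / (x + l j) + 1 / (y + l j))
    = (∑ j ∈ K, l j * (x + y + l j) / (x + l j)) + ∑ j ∈ K, l j * (x + y + l j) / (y + l j) := by
    rw [← Finset.sum_add_distrib]
    refine Finset.sum_congr rfl fun j _ => ?_
    ring
  rw [e3]
  apply mul_left_cancel₀ hpos.ne'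
  rw [h1]
  field_simp
  ring

end HZ

namespace HZ

/-- the coefficients `n ^ n / n!` -/
noncomputable def A (n : ℕ) : ℚ := (n : ℚ) ^ n / (n.factorial : ℚ)

theorem abel0 (j P : ℕ) (hj : 0 < j) :
    ∑ c ∈ Finset.range (P + 1), (P.choose c : ℚ) * (((j : ℚ) * ((j : ℚ) + c) ^ ((c : ℤ) - 1)) *
      ((P - c : ℕ) : ℚ) ^ (P - c)) = ((j : ℚ) + P) ^ P := by
  have h := H1 (fun _ : ℕ => (1 : ℚ)) (fun _ => zero_le_one) (j : ℚ) (by exact_mod_cast hj)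
    (Finset.range P) 0
  simp only [hh, Finset.sum_const, nsmul_eq_mul, mul_one, zero_add, Finset.card_range] at h
  rw [← h]
  have h2 := Finset.sum_powerset_apply_card (fun c => ((j : ℚ) * ((j : ℚ) + c) ^ ((c : ℤ) - 1)) *
      ((P - c : ℕ) : ℚ) ^ (P - c)) (x := Finset.range P)
  simp only [Finset.card_range, nsmul_eq_mul] at h2
  rw [← h2]
  refine Finset.sum_congr rfl fun I hI => ?_
  rw [Finset.mem_powerset] at hI
  rw [Finset.card_sdiff_of_subset hI, Finset.card_range]

theorem abel1 (j p : ℕ) (hj : 0 < j) (hp : j ≤ p) :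
    ∑ b ∈ Finset.Ico j (p + 1), A (p - b) * ((j : ℚ) * (b : ℚ) ^ ((b : ℤ) - j - 1) / ((b - j).factorial : ℚ))
      = (p : ℚ) ^ (p - j) / ((p - j).factorial : ℚ) := by
  obtain ⟨P, rfl⟩ := Nat.exists_eq_add_of_le hp
  have h := abel0 j P hj
  rw [Finset.sum_Ico_eq_sum_range, show j + P - j = P by omega, show j + P + 1 - j = P + 1 by omega]
  push_cast
  rw [← h, Finset.sum_div]
  refine Finset.sum_congr rfl fun c hc => ?_
  simp only [Finset.mem_range] at hc
  rw [show j + c - j = c by omega, show j + P - (j + c) = P - c by omega, A,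
    Nat.cast_choose ℚ (show c ≤ P by omega), show (j : ℤ) + c - j - 1 = c - 1 by ring]
  have h1 : (P.factorial : ℚ) ≠ 0 := by positivity
  have h2 : (c.factorial : ℚ) ≠ 0 := by positivity
  have h3 : ((P - c).factorial : ℚ) ≠ 0 := by positivity
  field_simp

theorem tele (b q : ℕ) (hb : 0 < b) (hq : 0 < q) :
    (q : ℚ) * A q * A b / ((b : ℚ) + q) = ∑ j ∈ Finset.Ico 1 (b + 1),
      ((j : ℚ) * (b : ℚ) ^ ((b : ℤ) - j - 1) / ((b - j).factorial : ℚ)) *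
        ((q : ℚ) ^ (q + j) / ((q + j).factorial : ℚ)) := by
  have hbq : (b : ℚ) ≠ 0 := by positivity
  have key : ∀ t ≤ b, (∑ j ∈ Finset.range t,
      ((j : ℚ) * (b : ℚ) ^ ((b : ℤ) - j - 1) / ((b - j).factorial : ℚ)) *
        ((q : ℚ) ^ (q + j) / ((q + j).factorial : ℚ))) * ((b : ℚ) + q) =
      (q : ℚ) * A q * A b - (b : ℚ) ^ (b - t) * (q : ℚ) ^ (q + t) * (q + t) /
        ((b - t).factorial * (q + t).factorial) := by
    intro t
    induction t with
    | zero =>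
      intro _
      simp [A]
      field_simp
      simp
    | succ t ih =>
      intro ht
      rw [Finset.sum_range_succ, add_mul, ih (by omega)]
      obtain ⟨d, rfl⟩ := Nat.exists_eq_add_of_le ht
      rw [show t + 1 + d - t = d + 1 by omega, show t + 1 + d - (t + 1) = d by omega,
        show ((t + 1 + d : ℕ) : ℤ) - t - 1 = (d : ℕ) by push_cast; ring, zpow_natCast,
        Nat.factorial_succ d, ← add_assoc q t 1, Nat.factorial_succ (q + t)]
      have h1 : (d.factorial : ℚ) ≠ 0 := by positivity
      have h2 : ((q + t).factorial : ℚ) ≠ 0 := by positivity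
      push_cast
      field_simp
      ring
  have h0 := key b le_rfl
  have hs := Finset.sum_range_succ (fun j : ℕ => ((j : ℚ) * (b : ℚ) ^ ((b : ℤ) - j - 1) / ((b - j).factorial : ℚ)) *
        ((q : ℚ) ^ (q + j) / ((q + j).factorial : ℚ))) b
  rw [Finset.range_eq_Ico, Finset.sum_eq_sum_Ico_succ_bot (by omega)] at hs
  simp only [Nat.cast_zero, zero_mul, zero_div, zero_add] at hs
  rw [hs, div_eq_iff (by positivity), add_mul, h0]
  have h2 : ((q + b).factorial : ℚ) ≠ 0 := by positivity
  simp
  field_simp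
  ring

theorem Rsum (p q : ℕ) (hq : 0 < q) :
    ∑ b ∈ Finset.Ico 1 (p + 1), A (p - b) * ((q : ℚ) * A q * A b / ((b : ℚ) + q)) =
      ∑ i ∈ Finset.range p, (p : ℚ) ^ i * (q : ℚ) ^ (p + q - i) /
        ((i.factorial : ℚ) * ((p + q - i).factorial : ℚ)) := by
  have h1 : ∀ b ∈ Finset.Ico 1 (p + 1), A (p - b) * ((q : ℚ) * A q * A b / ((b : ℚ) + q)) =
      ∑ j ∈ Finset.Ico 1 (b + 1), A (p - b) *
      ((j : ℚ) * (b : ℚ) ^ ((b : ℤ) - j - 1) / ((b - j).factorial : ℚ)) *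
        ((q : ℚ) ^ (q + j) / ((q + j).factorial : ℚ)) := by
    intro b hb
    rw [Finset.mem_Ico] at hb
    rw [tele b q (by omega) hq, Finset.mul_sum]
    refine Finset.sum_congr rfl fun j _ => by ring
  rw [Finset.sum_congr rfl h1]
  rw [Finset.sum_comm' (t' := Finset.Ico 1 (p + 1)) (s' := fun j => Finset.Ico j (p + 1))
    (by intro x y; simp only [Finset.mem_Ico]; omega)]
  have h2 : ∀ j ∈ Finset.Ico 1 (p + 1), ∑ b ∈ Finset.Ico j (p + 1), A (p - b) *
      ((j : ℚ) * (b : ℚ) ^ ((b : ℤ) - j - 1) / ((b - j).factorial : ℚ)) *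
        ((q : ℚ) ^ (q + j) / ((q + j).factorial : ℚ)) =
        (p : ℚ) ^ (p - j) * (q : ℚ) ^ (q + j) / ((p - j).factorial * (q + j).factorial) := by
    intro j hj
    rw [Finset.mem_Ico] at hj
    rw [← Finset.sum_mul, abel1 j p (by omega) (by omega)]
    rw [div_mul_div_comm]
  rw [Finset.sum_congr rfl h2, Finset.sum_Ico_eq_sum_range, ← Finset.sum_range_reflect]
  simp only [Nat.add_sub_cancel]
  refine Finset.sum_congr rfl fun i hi => ?_
  rw [Finset.mem_range] at hi
  rw [show p - (1 + (p - 1 - i)) = i by omega, show q + (1 + (p - 1 - i)) = p + q - i by omega]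

theorem star (p q : ℕ) (hp : 0 < p) (hq : 0 < q) :
    2 * A p * A q + ∑ b ∈ Finset.Ico 1 p, A (p - b) * ((q : ℚ) * A q * A b / ((b : ℚ) + q))
      + ∑ b ∈ Finset.Ico 1 q, A (q - b) * ((p : ℚ) * A p * A b / ((b : ℚ) + p)) = A (p + q) := by
  have h1 := Rsum p q hq
  have h2 := Rsum q p hp
  rw [Finset.sum_Ico_succ_top (by omega)] at h1 h2
  have hA0 : A 0 = 1 := by simp [A]
  have h3 : A (p + q) = (∑ i ∈ Finset.range p, (p : ℚ) ^ i * (q : ℚ) ^ (p + q - i) /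
        ((i.factorial : ℚ) * ((p + q - i).factorial : ℚ))) + A p * A q +
        ∑ i ∈ Finset.range q, (q : ℚ) ^ i * (p : ℚ) ^ (q + p - i) /
        ((i.factorial : ℚ) * ((q + p - i).factorial : ℚ)) := by
    have hb : A (p + q) = ∑ i ∈ Finset.range (p + 1 + q), (p : ℚ) ^ i * (q : ℚ) ^ (p + q - i) /
        ((i.factorial : ℚ) * ((p + q - i).factorial : ℚ)) := by
      rw [A]
      push_cast
      rw [add_pow, Finset.sum_div, show p + 1 + q = p + q + 1 by ring]
      refine Finset.sum_congr rfl fun i hi => ?_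
      rw [Finset.mem_range] at hi
      rw [Nat.cast_choose ℚ (show i ≤ p + q by omega)]
      have h1 : (i.factorial : ℚ) ≠ 0 := by positivity
      have h2 : ((p + q - i).factorial : ℚ) ≠ 0 := by positivity
      have h3 : ((p + q).factorial : ℚ) ≠ 0 := by positivity
      field_simp
    rw [hb, Finset.sum_range_add, Finset.sum_range_succ, ← Finset.sum_range_reflect _ q]
    congr 1
    · congr 1
      rw [show p + q - p = q by omega, A, A, div_mul_div_comm]
    · refine Finset.sum_congr rfl fun i hi => ?_
      rw [Finset.mem_range] at hi
      rw [show p + 1 + (q - 1 - i) = q + p - i by omega, show p + q - (q + p - i) = i by omega]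
      ring
  rw [h3, ← h1, ← h2]
  simp only [Nat.sub_self, hA0]
  have e : (q : ℚ) * A q * A p / ((p : ℚ) + q) + (p : ℚ) * A p * A q / ((q : ℚ) + p) = A p * A q := by
    field_simp
    ring
  linarith

theorem abel2 (N : ℕ) (hN : 0 < N) :
    ∑ a ∈ Finset.Ico 1 N, A a * A (N - a) / ((a : ℚ) * ((N - a : ℕ) : ℚ)) = 2 * (N - 1) / (N : ℚ) ^ 2 * A N := by
  have h := abel1 1 N one_pos hN
  rw [Finset.sum_Ico_succ_top (by omega)] at h
  have hA0 : A 0 = 1 := by simp [A]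
  have h1 : ∀ b ∈ Finset.Ico 1 (N + 1), ((1 : ℕ) : ℚ) * (b : ℚ) ^ ((b : ℤ) - (1 : ℕ) - 1) / ((b - 1).factorial : ℚ)
      = A b / b := by
    intro b hb
    rw [Finset.mem_Ico] at hb
    obtain ⟨c, rfl⟩ := Nat.exists_eq_add_of_le hb.1
    have hc : ((1 + c : ℕ) : ℚ) ≠ 0 := by positivity
    rw [A, show 1 + c - 1 = c by omega, Nat.add_comm 1 c, Nat.factorial_succ]
    rw [show ((c + 1 : ℕ) : ℤ) - (1 : ℕ) - 1 = (c + 1 : ℕ) - 2 by push_cast; ring, zpow_sub₀ (by positivity), zpow_natCast]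
    have h1 : (c.factorial : ℚ) ≠ 0 := by positivity
    push_cast
    field_simp
  have h2 : ∀ b ∈ Finset.Ico 1 N, A (N - b) * (((1 : ℕ) : ℚ) * (b : ℚ) ^ ((b : ℤ) - (1 : ℕ) - 1) / ((b - 1).factorial : ℚ))
      = A b * A (N - b) / b := by
    intro b hb
    rw [h1 b (by simp at hb ⊢; omega)]; ring
  rw [Finset.sum_congr rfl h2, h1 N (by simp; omega), Nat.sub_self, hA0] at h
  have h3 : (N : ℚ) ^ (N - 1) / ((N - 1).factorial : ℚ) = A N := by
    obtain ⟨c, rfl⟩ := Nat.exists_eq_add_of_le hN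
    rw [A, show 0 + 1 + c - 1 = c by omega, show 0 + 1 + c = c + 1 by omega, Nat.factorial_succ, pow_succ]
    push_cast
    field_simp
  rw [h3] at h
  have h4 : ∑ a ∈ Finset.Ico 1 N, A a * A (N - a) / ((a : ℚ) * ((N - a : ℕ) : ℚ))
     = 1 / N * (∑ a ∈ Finset.Ico 1 N, A a * A (N - a) / a + ∑ a ∈ Finset.Ico 1 N, A (N - a) * A a / (N - a : ℕ)) := by
    rw [← Finset.sum_add_distrib, Finset.mul_sum]
    refine Finset.sum_congr rfl fun a ha => ?_
    rw [Finset.mem_Ico] at ha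
    obtain ⟨c, rfl⟩ := Nat.exists_eq_add_of_lt ha.2
    rw [show a + c + 1 - a = c + 1 by omega]
    have : (a : ℚ) ≠ 0 := by have := ha.1; positivity
    push_cast
    field_simp
    ring
  have h5 : ∑ a ∈ Finset.Ico 1 N, A (N - a) * A a / (N - a : ℕ) = ∑ a ∈ Finset.Ico 1 N, A a * A (N - a) / a := by
    refine Finset.sum_bij' (fun a _ => N - a) (fun a _ => N - a) ?_ ?_ ?_ ?_ ?_ <;>
      simp only [Finset.mem_Ico] <;> intro a ha
    · omega
    · omega
    · omega
    · omega
    · rw [show N - (N - a) = a by omega]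
  have h6 : ∑ a ∈ Finset.Ico 1 N, A a * A (N - a) / a = A N - A N / N := by linarith
  have : (N : ℚ) ≠ 0 := by positivity
  rw [h4, h5, h6]
  field_simp
  ring

/-- weight of a cycle -/
noncomputable def phi (n : ℕ) : ℚ := n * A n

end HZ

namespace HZ

theorem A_pos (n : ℕ) : 0 < A n := by
  unfold A
  rcases Nat.eq_zero_or_pos n with h | h
  · subst h; simp
  · positivity

theorem phi_pos (n : ℕ) (hn : 0 < n) : 0 < phi n := by
  have := A_pos n
  unfold phi
  positivity

/-- inner sum -/
noncomputable def Y (p q : ℕ) : ℚ :=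
  ∑ b ∈ Finset.Ico 1 p, A (p - b) * ((q : ℚ) * A q * A b / ((b : ℚ) + q))

theorem splitsum {ι : Type*} [DecidableEq ι] (s : ι → ℕ) (K : Finset ι) (hs : ∀ i ∈ K, 0 < s i)
    (i : ι) (hi : i ∈ K) :
    (s i : ℚ) * ∑ a ∈ Finset.Ico 1 (s i), phi a * phi (s i - a) / phi (s i) *
      SS (fun j => (s j : ℚ)) (K.erase i) a ((s i - a : ℕ) : ℚ) /
        ((∑ j ∈ K, s j : ℕ) : ℚ) ^ ((K.card : ℤ) - 3) =
    2 * ((s i : ℚ) - 1) - 1 / ((∑ j ∈ K, s j : ℕ) : ℚ) * ∑ j ∈ K.erase i,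
      2 * ((s i : ℚ) + s j) / (A (s i) * A (s j)) * Y (s i) (s j) := by
  set n : ℚ := ((∑ j ∈ K, s j : ℕ) : ℚ) with hn
  have hnpos : 0 < n := by
    rw [hn]
    have := Finset.sum_pos hs ⟨i, hi⟩
    exact_mod_cast this
  have hsi := hs i hi
  have hAi := A_pos (s i)
  have h1 : ∀ a ∈ Finset.Ico 1 (s i), phi a * phi (s i - a) / phi (s i) *
      SS (fun j => (s j : ℚ)) (K.erase i) a ((s i - a : ℕ) : ℚ) / n ^ ((K.card : ℤ) - 3)
      = (s i : ℚ) / A (s i) * (A a * A (s i - a) / ((a : ℚ) * ((s i - a : ℕ) : ℚ)))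
       - 1 / n * (1 / phi (s i)) * ∑ j ∈ K.erase i, (s j : ℚ) * ((s i : ℚ) + s j) *
         (A a * A (s i - a) / ((a : ℚ) + s j) + A a * A (s i - a) / (((s i - a : ℕ) : ℚ) + s j)) := by
    intro a ha
    rw [Finset.mem_Ico] at ha
    obtain ⟨b, hb⟩ := Nat.exists_eq_add_of_lt ha.2
    have hb2 : s i - a = b + 1 := by omega
    have hsum : (a : ℚ) + ((b + 1 : ℕ) : ℚ) = s i := by rw [hb]; push_cast; ring
    have hap : (0 : ℚ) < a := by exact_mod_cast ha.1
    have hbp : (0 : ℚ) < (b + 1 : ℕ) := by positivity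
    rw [hb2]
    rw [SS_eq _ (fun j => Nat.cast_nonneg _) _ hap _ _ hbp]
    have hM : (a : ℚ) + ((b + 1 : ℕ) : ℚ) + ∑ j ∈ K.erase i, (s j : ℚ) = n := by
      rw [hsum, hn, ← Finset.add_sum_erase _ _ hi]; push_cast; rfl
    rw [hM, hsum, Finset.card_erase_of_mem hi]
    have hc := Finset.card_pos.2 ⟨i, hi⟩
    rw [show ((K.card - 1 : ℕ) : ℤ) - 3 = (K.card : ℤ) - 3 - 1 by omega, zpow_sub_one₀ hnpos.ne']
    have hz : n ^ ((K.card : ℤ) - 3) ≠ 0 := (zpow_pos hnpos _).ne'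
    have hS : ∑ j ∈ K.erase i, (s j : ℚ) * ((s i : ℚ) + s j) *
         (A a * A (b + 1) / ((a : ℚ) + s j) + A a * A (b + 1) / (((b + 1 : ℕ) : ℚ) + s j))
         = A a * A (b + 1) * ∑ j ∈ K.erase i, (s j : ℚ) * ((s i : ℚ) + s j) * 
         (1 / ((a : ℚ) + s j) + 1 / (((b + 1 : ℕ) : ℚ) + s j)) := by
      rw [Finset.mul_sum]
      refine Finset.sum_congr rfl fun j _ => by ring
    rw [hS]
    generalize ∑ j ∈ K.erase i, (s j : ℚ) * ((s i : ℚ) + s j) * 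
         (1 / ((a : ℚ) + s j) + 1 / (((b + 1 : ℕ) : ℚ) + s j)) = W
    unfold phi
    have hsq : (s i : ℚ) ≠ 0 := by positivity
    field_simp
  rw [Finset.sum_congr rfl h1, Finset.sum_sub_distrib, ← Finset.mul_sum, abel2 _ hsi, ← Finset.mul_sum,
    Finset.sum_comm]
  have h2 : ∀ j ∈ K.erase i, ∑ a ∈ Finset.Ico 1 (s i), (s j : ℚ) * ((s i : ℚ) + s j) *
         (A a * A (s i - a) / ((a : ℚ) + s j) + A a * A (s i - a) / (((s i - a : ℕ) : ℚ) + s j))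
      = 2 * ((s i : ℚ) + s j) / A (s j) * Y (s i) (s j) := by
    intro j _
    have hAj := A_pos (s j)
    have hr : ∑ a ∈ Finset.Ico 1 (s i), A a * A (s i - a) / (((s i - a : ℕ) : ℚ) + s j)
       = ∑ a ∈ Finset.Ico 1 (s i), A a * A (s i - a) / ((a : ℚ) + s j) := by
      refine Finset.sum_bij' (fun a _ => s i - a) (fun a _ => s i - a) ?_ ?_ ?_ ?_ ?_ <;>
      simp only [Finset.mem_Ico] <;> intro a ha
      · omega
      · omega
      · omega
      · omega
      · rw [show s i - (s i - a) = a by omega, mul_comm]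
    have hY : Y (s i) (s j) = s j * A (s j) * ∑ a ∈ Finset.Ico 1 (s i), A a * A (s i - a) / ((a : ℚ) + s j) := by
      rw [Y, Finset.mul_sum]
      refine Finset.sum_congr rfl fun a _ => by ring
    rw [← Finset.mul_sum, Finset.sum_add_distrib, hr, hY]
    field_simp
    ring
  rw [Finset.sum_congr rfl h2]
  have h3 : ∑ j ∈ K.erase i, 2 * ((s i : ℚ) + s j) / (A (s i) * A (s j)) * Y (s i) (s j)
    = 1 / A (s i) * ∑ j ∈ K.erase i, 2 * ((s i : ℚ) + s j) / A (s j) * Y (s i) (s j) := by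
      rw [Finset.mul_sum]
      refine Finset.sum_congr rfl fun j _ => ?_
      have hAj := A_pos (s j)
      field_simp
  rw [h3]
  generalize ∑ j ∈ K.erase i, 2 * ((s i : ℚ) + s j) / A (s j) * Y (s i) (s j) = W
  unfold phi
  have hsq : (s i : ℚ) ≠ 0 := by positivity
  field_simp

theorem sum_erase_swap {ι : Type*} [DecidableEq ι] (K : Finset ι) (F : ι → ι → ℚ) :
    ∑ i ∈ K, ∑ j ∈ K.erase i, F i j = ∑ i ∈ K, ∑ j ∈ K.erase i, F j i := by
  refine Finset.sum_comm' ?_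
  intro x y
  simp only [Finset.mem_erase]
  grind

theorem block {ι : Type*} [DecidableEq ι] (s : ι → ℕ) (K : Finset ι) (hs : ∀ i ∈ K, 0 < s i)
    (hK : K.Nonempty) :
    (∑ i ∈ K, ∑ j ∈ K.erase i, (s i : ℚ) * s j * (phi (s i + s j) / (phi (s i) * phi (s j))) /
        ((∑ j ∈ K, s j : ℕ) : ℚ))
    + ∑ i ∈ K, (s i : ℚ) * ∑ a ∈ Finset.Ico 1 (s i), phi a * phi (s i - a) / phi (s i) *
      SS (fun j => (s j : ℚ)) (K.erase i) a ((s i - a : ℕ) : ℚ) /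
        ((∑ j ∈ K, s j : ℕ) : ℚ) ^ ((K.card : ℤ) - 3) =
    2 * (((∑ j ∈ K, s j : ℕ) : ℚ) + K.card - 2) := by
  rw [Finset.sum_congr rfl (fun i hi => splitsum s K hs i hi)]
  set n : ℚ := ((∑ j ∈ K, s j : ℕ) : ℚ) with hn
  have hnpos : 0 < n := by
    rw [hn]
    have := Finset.sum_pos hs hK
    exact_mod_cast this
  rw [Finset.sum_sub_distrib, ← Finset.mul_sum, ← Finset.mul_sum, Finset.sum_sub_distrib]
  have hJ : ∀ i ∈ K, ∑ j ∈ K.erase i, (s i : ℚ) * s j * (phi (s i + s j) / (phi (s i) * phi (s j))) / n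
     = 1 / n * ∑ j ∈ K.erase i, ((s i : ℚ) + s j) * A (s i + s j) / (A (s i) * A (s j)) := by
    intro i hi
    rw [Finset.mul_sum]
    refine Finset.sum_congr rfl fun j hj => ?_
    have hAj := A_pos (s j)
    have hAi := A_pos (s i)
    have := hs i hi
    have := hs j (Finset.mem_of_mem_erase hj)
    unfold phi
    push_cast
    field_simp
  rw [Finset.sum_congr rfl hJ, ← Finset.mul_sum]
  set J := ∑ i ∈ K, ∑ j ∈ K.erase i, ((s i : ℚ) + s j) * A (s i + s j) / (A (s i) * A (s j)) with hJd
  set X := ∑ i ∈ K, ∑ j ∈ K.erase i, 2 * ((s i : ℚ) + s j) / (A (s i) * A (s j)) * Y (s i) (s j) with hX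
  have hXX : X + X = 2 * J - 4 * ∑ i ∈ K, ∑ j ∈ K.erase i, ((s i : ℚ) + s j) := by
    nth_rewrite 2 [hX]
    rw [sum_erase_swap, hX, hJd, Finset.mul_sum, Finset.mul_sum, ← Finset.sum_add_distrib, ← Finset.sum_sub_distrib]
    refine Finset.sum_congr rfl fun i hi => ?_
    rw [Finset.mul_sum, Finset.mul_sum, ← Finset.sum_add_distrib, ← Finset.sum_sub_distrib]
    refine Finset.sum_congr rfl fun j hj => ?_
    have := star (s i) (s j) (hs i hi) (hs j (Finset.mem_of_mem_erase hj))
    have hAj := A_pos (s j)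
    have hAi := A_pos (s i)
    change 2 * A (s i) * A (s j) + Y (s i) (s j) + Y (s j) (s i) = _ at this
    rw [← this]
    field_simp
    ring
  have hT : ∑ i ∈ K, ∑ j ∈ K.erase i, ((s i : ℚ) + s j) = 2 * (K.card - 1) * n := by
    have h1 : ∀ i ∈ K, ∑ j ∈ K.erase i, ((s i : ℚ) + s j) = ((K.card : ℚ) - 2) * s i + n := by
      intro i hi
      have hc := Finset.card_pos.2 ⟨i, hi⟩
      rw [Finset.sum_add_distrib, Finset.sum_const, Finset.card_erase_of_mem hi, nsmul_eq_mul,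
        Nat.cast_sub hc, hn, ← Finset.add_sum_erase _ _ hi]
      push_cast
      ring
    rw [Finset.sum_congr rfl h1, Finset.sum_add_distrib, ← Finset.mul_sum, Finset.sum_const, nsmul_eq_mul, hn]
    push_cast
    ring
  have hX2 : X = J - 4 * (K.card - 1) * n := by
    rw [hT] at hXX; linarith
  have hsn : ∑ i ∈ K, (s i : ℚ) = n := by rw [hn]; push_cast; rfl
  rw [hX2, hsn, Finset.sum_const, nsmul_eq_mul]
  field_simp
  ring

end HZ

namespace HZ

set_option linter.unusedSectionVars false

variable {α : Type*} [Fintype α] [DecidableEq α]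

open Classical in
/-- class of `x` -/
noncomputable def cls (r : Setoid α) (x : α) : Finset α := Finset.univ.filter (fun y => r x y)

/-- all classes -/
noncomputable def cl (r : Setoid α) : Finset (Finset α) := Finset.univ.image (cls r)

theorem mem_cls {r : Setoid α} {x y : α} : y ∈ cls r x ↔ r x y := by simp [cls]

theorem self_mem_cls (r : Setoid α) (x : α) : x ∈ cls r x := mem_cls.2 (r.refl x)

theorem cls_mem_cl (r : Setoid α) (x : α) : cls r x ∈ cl r := by simp [cl]

theorem cls_eq {r : Setoid α} {x y : α} (h : r x y) : cls r x = cls r y := by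
  ext z; simp only [mem_cls]
  exact ⟨fun h2 => r.trans (r.symm h) h2, fun h2 => r.trans h h2⟩

theorem cl_eq_cls {r : Setoid α} {B : Finset α} (hB : B ∈ cl r) {x : α} (hx : x ∈ B) : B = cls r x := by
  simp only [cl, Finset.mem_image, Finset.mem_univ, true_and] at hB
  obtain ⟨y, rfl⟩ := hB
  exact cls_eq (mem_cls.1 hx)

theorem cl_nonempty {r : Setoid α} {B : Finset α} (hB : B ∈ cl r) : B.Nonempty := by
  simp only [cl, Finset.mem_image, Finset.mem_univ, true_and] at hB
  obtain ⟨y, rfl⟩ := hB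
  exact ⟨y, self_mem_cls r y⟩

theorem cl_disj {r : Setoid α} {B B' : Finset α} (hB : B ∈ cl r) (hB' : B' ∈ cl r) {x : α}
    (hx : x ∈ B) (hx' : x ∈ B') : B = B' := by
  rw [cl_eq_cls hB hx, cl_eq_cls hB' hx']

theorem mem_cl_iff {r : Setoid α} {B : Finset α} : B ∈ cl r ↔ ∃ x, B = cls r x := by
  simp only [cl, Finset.mem_image, Finset.mem_univ, true_and]
  exact ⟨fun ⟨x, h⟩ => ⟨x, h.symm⟩, fun ⟨x, h⟩ => ⟨x, h.symm⟩⟩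

/-- the classes of `s` inside `B` -/
noncomputable def KK (s : Setoid α) (B : Finset α) : Finset (Finset α) := (cl s).filter (· ⊆ B)

theorem mem_KK {s : Setoid α} {B C : Finset α} : C ∈ KK s B ↔ C ∈ cl s ∧ C ⊆ B := by
  simp [KK]

theorem cls_sub {s r : Setoid α} (h : s ≤ r) (x : α) : cls s x ⊆ cls r x := by
  intro y hy; rw [mem_cls] at *; exact h hy

/-- `s`-saturated set -/
def Sat (s : Setoid α) (B : Finset α) : Prop := ∀ x y, s x y → x ∈ B → y ∈ B

theorem sat_of_le {s r : Setoid α} (h : s ≤ r) {B : Finset α} (hB : B ∈ cl r) : Sat s B := by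
  intro x y hxy hx
  rw [cl_eq_cls hB hx, mem_cls]
  exact h hxy

theorem cls_mem_KK {s : Setoid α} {B : Finset α} (hB : Sat s B) {x : α} (hx : x ∈ B) :
    cls s x ∈ KK s B := by
  rw [mem_KK]
  refine ⟨cls_mem_cl s x, ?_⟩
  intro y hy
  exact hB x y (mem_cls.1 hy) hx

theorem sum_KK {M : Type*} [AddCommMonoid M] {s : Setoid α} {B : Finset α} (hB : Sat s B)
    (f : α → M) : ∑ C ∈ KK s B, ∑ x ∈ C, f x = ∑ x ∈ B, f x := by
  rw [← Finset.sum_fiberwise_of_maps_to (s := B) (t := KK s B) (g := cls s)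
    (fun x hx => cls_mem_KK hB hx)]
  refine Finset.sum_congr rfl fun C hC => Finset.sum_congr ?_ fun _ _ => rfl
  rw [mem_KK] at hC
  ext x
  simp only [Finset.mem_filter]
  constructor
  · intro hx; exact ⟨hC.2 hx, (cl_eq_cls hC.1 hx).symm⟩
  · rintro ⟨_, rfl⟩; exact self_mem_cls s x

theorem card_KK {s : Setoid α} {B : Finset α} (hB : Sat s B) : ∑ C ∈ KK s B, C.card = B.card := by
  have := sum_KK hB (fun _ => 1)
  simpa using this

theorem sum_cl {M : Type*} [AddCommMonoid M] (r : Setoid α) (f : α → M) :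
    ∑ B ∈ cl r, ∑ x ∈ B, f x = ∑ x, f x := by
  have := sum_KK (s := r) (B := Finset.univ) (fun _ _ _ _ => Finset.mem_univ _) f
  rw [← this]
  congr 1
  ext B; simp [mem_KK]

theorem sum_cl_KK {M : Type*} [AddCommMonoid M] {s r : Setoid α} (h : s ≤ r) (f : Finset α → M) :
    ∑ B ∈ cl r, ∑ C ∈ KK s B, f C = ∑ C ∈ cl s, f C := by
  rw [Finset.sum_sigma']
  refine Finset.sum_bij (fun p _ => p.2) ?_ ?_ ?_ ?_
  · rintro ⟨B, C⟩ hp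
    simp only [Finset.mem_sigma, mem_KK] at hp
    exact hp.2.1
  · rintro ⟨B, C⟩ hp ⟨B', C'⟩ hp' h
    simp only [Finset.mem_sigma, mem_KK] at hp hp'
    simp only at h
    subst h
    obtain ⟨x, hx⟩ := cl_nonempty hp.2.1
    have := cl_disj hp.1 hp'.1 (hp.2.2 hx) (hp'.2.2 hx)
    subst this; rfl
  · intro C hC
    obtain ⟨x, rfl⟩ := mem_cl_iff.1 hC
    exact ⟨⟨cls r x, cls s x⟩, by simp [mem_KK, cls_mem_cl, cls_sub h], rfl⟩
  · intros; rfl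

theorem card_cl_KK {s r : Setoid α} (h : s ≤ r) : ∑ B ∈ cl r, (KK s B).card = (cl s).card := by
  have := sum_cl_KK h (fun _ => 1)
  simpa using this

/-- split a setoid along a set -/
def split (r : Setoid α) (S : Finset α) : Setoid α where
  r a b := r a b ∧ (a ∈ S ↔ b ∈ S)
  iseqv := ⟨fun a => ⟨r.refl a, Iff.rfl⟩, fun h => ⟨r.symm h.1, h.2.symm⟩,
    fun h h' => ⟨r.trans h.1 h'.1, h.2.trans h'.2⟩⟩

theorem split_iff {r : Setoid α} {S : Finset α} {a b : α} : split r S a b ↔ r a b ∧ (a ∈ S ↔ b ∈ S) :=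
  Iff.rfl

theorem split_le (r : Setoid α) (S : Finset α) : split r S ≤ r := fun _ _ h => h.1

/-- join two points -/
def join (r : Setoid α) (x y : α) : Setoid α where
  r a b := r a b ∨ (r a x ∧ r y b) ∨ (r a y ∧ r x b)
  iseqv := by
    refine ⟨fun a => Or.inl (r.refl a), ?_, ?_⟩
    · intro a b h
      rcases h with h | h | h
      · exact Or.inl (r.symm h)
      · exact Or.inr (Or.inr ⟨r.symm h.2, r.symm h.1⟩)
      · exact Or.inr (Or.inl ⟨r.symm h.2, r.symm h.1⟩)
    · intro a b c h h'
      have tr := fun {a b c : α} (h : r a b) (h' : r b c) => r.trans h h'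
      have sy := fun {a b : α} (h : r a b) => r.symm h
      rcases h with h | ⟨h1, h2⟩ | ⟨h1, h2⟩ <;> rcases h' with h' | ⟨h3, h4⟩ | ⟨h3, h4⟩
      · exact Or.inl (tr h h')
      · exact Or.inr (Or.inl ⟨tr h h3, h4⟩)
      · exact Or.inr (Or.inr ⟨tr h h3, h4⟩)
      · exact Or.inr (Or.inl ⟨h1, tr h2 h'⟩)
      · exact Or.inr (Or.inl ⟨h1, h4⟩)
      · exact Or.inl (tr h1 h4)
      · exact Or.inr (Or.inr ⟨h1, tr h2 h'⟩)
      · exact Or.inl (tr h1 h4)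
      · exact Or.inr (Or.inr ⟨h1, h4⟩)

theorem join_iff {r : Setoid α} {x y a b : α} :
    join r x y a b ↔ r a b ∨ (r a x ∧ r y b) ∨ (r a y ∧ r x b) := Iff.rfl

theorem le_join (r : Setoid α) (x y : α) : r ≤ join r x y := fun _ _ h => Or.inl h

theorem join_xy (r : Setoid α) (x y : α) : join r x y x y :=
  Or.inr (Or.inl ⟨r.refl x, r.refl y⟩)

theorem join_le {r t : Setoid α} {x y : α} (h : r ≤ t) (hxy : t x y) : join r x y ≤ t := by
  intro a b hab
  rcases hab with h' | ⟨h1, h2⟩ | ⟨h1, h2⟩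
  · exact h h'
  · exact t.trans (h h1) (t.trans hxy (h h2))
  · exact t.trans (h h1) (t.trans (t.symm hxy) (h h2))

theorem join_self {r : Setoid α} {x y : α} (h : r x y) : join r x y = r :=
  le_antisymm (join_le le_rfl h) (le_join r x y)

/-- recovering `r` from its join -/
theorem split_join {r : Setoid α} {x y : α} (h : ¬ r x y) : split (join r x y) (cls r x) = r := by
  have tr := fun {a b c : α} (h : r a b) (h' : r b c) => r.trans h h'
  have sy := fun {a b : α} (h : r a b) => r.symm h
  ext a b
  rw [split_iff, join_iff, mem_cls, mem_cls]
  constructor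
  · rintro ⟨h' | ⟨h1, h2⟩ | ⟨h1, h2⟩, h3⟩
    · exact h'
    · exact absurd (tr (h3.1 (sy h1)) (sy h2)) h
    · exact absurd (tr (h3.2 h2) h1) h
  · intro h'
    exact ⟨Or.inl h', fun h1 => tr h1 h', fun h1 => tr h1 (sy h')⟩

theorem join_split {r : Setoid α} {x y : α} (h : r x y) {S : Finset α} (hS : S ⊆ cls r x)
    (hx : x ∈ S) (hy : y ∉ S) : join (split r S) x y = r := by
  have tr := fun {a b c : α} (h : r a b) (h' : r b c) => r.trans h h'
  have sy := fun {a b : α} (h : r a b) => r.symm h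
  apply le_antisymm (join_le (split_le r S) h)
  intro a b hab
  rw [join_iff, split_iff, split_iff, split_iff, split_iff, split_iff]
  by_cases ha : a ∈ S <;> by_cases hb : b ∈ S
  · exact Or.inl ⟨hab, by simp [ha, hb]⟩
  · have := mem_cls.1 (hS ha)
    exact Or.inr (Or.inl ⟨⟨sy this, by simp [ha, hx]⟩, tr (sy h) (tr this hab), by simp [hb, hy]⟩)
  · have := mem_cls.1 (hS hb)
    exact Or.inr (Or.inr ⟨⟨tr hab (tr (sy this) h), by simp [ha, hy]⟩, this, by simp [hb, hx]⟩)
  · exact Or.inl ⟨hab, by simp [ha, hb]⟩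

theorem cls_split {r : Setoid α} {x : α} {S : Finset α} (hS : S ⊆ cls r x)
    (hx : x ∈ S) : cls (split r S) x = S := by
  ext z
  rw [mem_cls, split_iff]
  constructor
  · intro h; exact h.2.1 hx
  · intro h; exact ⟨mem_cls.1 (hS h), by simp [h, hx]⟩

theorem cl_split {r : Setoid α} {B S : Finset α} (hB : B ∈ cl r) (hS : S ⊆ B) (hne : S.Nonempty)
    (hne' : (B \ S).Nonempty) :
    cl (split r S) = insert S (insert (B \ S) ((cl r).erase B)) := by
  have key : ∀ x, cls (split r S) x = if x ∈ S then S else if x ∈ B then B \ S else cls r x := by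
    intro x
    split_ifs with h1 h2
    · exact cls_split (by rw [← cl_eq_cls hB (hS h1)]; exact hS) h1
    · have hb := cl_eq_cls hB h2
      ext z
      rw [mem_cls, split_iff, Finset.mem_sdiff]
      rw [hb, mem_cls]; simp only [h1, false_iff]
    · ext z
      rw [mem_cls, split_iff, mem_cls]
      simp only [h1, false_iff, and_iff_left_iff_imp]
      intro hxz hz
      apply h2
      rw [cl_eq_cls hB (hS hz), mem_cls]
      exact r.symm hxz
  ext D
  rw [mem_cl_iff]
  simp only [Finset.mem_insert, Finset.mem_erase]
  constructor
  · rintro ⟨x, rfl⟩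
    rw [key]
    split_ifs with h1 h2
    · exact Or.inl rfl
    · exact Or.inr (Or.inl rfl)
    · refine Or.inr (Or.inr ⟨?_, cls_mem_cl r x⟩)
      rintro h
      exact h2 (h ▸ self_mem_cls r x)
  · rintro (rfl | rfl | ⟨h1, h2⟩)
    · obtain ⟨x, hx⟩ := hne
      exact ⟨x, by rw [key]; simp [hx]⟩
    · obtain ⟨x, hx⟩ := hne'
      rw [Finset.mem_sdiff] at hx
      exact ⟨x, by rw [key]; simp [hx]⟩
    · obtain ⟨x, hx⟩ := cl_nonempty h2
      refine ⟨x, ?_⟩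
      have hxB : x ∉ B := fun h => h1 (cl_disj h2 hB hx h)
      rw [key, if_neg (fun h => hxB (hS h)), if_neg hxB]
      exact cl_eq_cls h2 hx

theorem split_notMem {r : Setoid α} {B S : Finset α} (hB : B ∈ cl r) (hS : S ⊆ B) (hne : S.Nonempty)
    (hne' : (B \ S).Nonempty) : S ∉ insert (B \ S) ((cl r).erase B) ∧ (B \ S) ∉ (cl r).erase B := by
  obtain ⟨x, hx⟩ := hne
  obtain ⟨y, hy⟩ := hne'
  rw [Finset.mem_sdiff] at hy
  simp only [Finset.mem_insert, Finset.mem_erase]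
  refine ⟨?_, ?_⟩
  · rintro (h | ⟨h1, h2⟩)
    · have h' := hx
      rw [h] at h'
      exact (Finset.mem_sdiff.1 h').2 hx
    · exact h1 (cl_disj h2 hB hx (hS hx))
  · rintro ⟨h1, h2⟩
    exact h1 (cl_disj h2 hB (Finset.mem_sdiff.2 hy) hy.1)

theorem card_cl_split {r : Setoid α} {B S : Finset α} (hB : B ∈ cl r) (hS : S ⊆ B) (hne : S.Nonempty)
    (hne' : (B \ S).Nonempty) : (cl (split r S)).card = (cl r).card + 1 := by
  have h := split_notMem hB hS hne hne'
  rw [cl_split hB hS hne hne', Finset.card_insert_of_notMem h.1, Finset.card_insert_of_notMem h.2,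
    Finset.card_erase_of_mem hB]
  have := Finset.card_pos.2 ⟨B, hB⟩
  omega

theorem prod_cl_split {r : Setoid α} {B S : Finset α} (hB : B ∈ cl r) (hS : S ⊆ B) (hne : S.Nonempty)
    (hne' : (B \ S).Nonempty) (f : Finset α → ℚ) :
    ∏ D ∈ cl (split r S), f D = f S * f (B \ S) * ∏ D ∈ (cl r).erase B, f D := by
  have h := split_notMem hB hS hne hne'
  rw [cl_split hB hS hne hne', Finset.prod_insert h.1, Finset.prod_insert h.2]
  ring

/-- fibres of the join map -/
theorem join_fiber {r r' : Setoid α} {x y : α} (hr : r' ≠ r) :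
    join r' x y = r ↔ r x y ∧ ¬ r' x y ∧ cls r' x ⊆ cls r x ∧ r' = split r (cls r' x) := by
  constructor
  · rintro rfl
    have hn : ¬ r' x y := fun h => hr (join_self h).symm
    exact ⟨join_xy _ _ _, hn, cls_sub (le_join _ _ _) x, (split_join hn).symm⟩
  · rintro ⟨h1, h2, h3, h4⟩
    rw [h4]
    exact join_split h1 h3 (self_mem_cls _ _) (fun h => h2 (mem_cls.1 h))

end HZ

namespace HZ
set_option linter.unusedSectionVars false

variable {α : Type*} [Fintype α] [DecidableEq α]

/-- the weight -/
noncomputable def W (r s : Setoid α) : ℚ :=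
  (∏ B ∈ cl r, (B.card : ℚ) ^ (((KK s B).card : ℤ) - 3)) * ∏ C ∈ cl s, phi C.card

theorem card_KK_split {s : Setoid α} {C S B : Finset α} (hC : C ∈ cl s) (hS : S ⊆ C)
    (hne : S.Nonempty) (hne' : (C \ S).Nonempty) (hB : Sat s B) :
    (KK (split s S) B).card = (KK s B).card + if C ⊆ B then 1 else 0 := by
  have h := split_notMem hC hS hne hne'
  by_cases hCB : C ⊆ B
  · have e : KK (split s S) B = insert S (insert (C \ S) ((KK s B).erase C)) := by
      ext D
      rw [mem_KK, cl_split hC hS hne hne']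
      simp only [Finset.mem_insert, Finset.mem_erase, mem_KK]
      constructor
      · tauto
      · rintro (rfl | rfl | h)
        · exact ⟨Or.inl rfl, hS.trans hCB⟩
        · exact ⟨Or.inr (Or.inl rfl), Finset.sdiff_subset.trans hCB⟩
        · tauto
    have hsub : (KK s B).erase C ⊆ (cl s).erase C :=
      Finset.erase_subset_erase _ (Finset.filter_subset _ _)
    have h1 : C \ S ∉ (KK s B).erase C := fun h' => h.2 (hsub h')
    have h2 : S ∉ insert (C \ S) ((KK s B).erase C) := fun h' =>
      h.1 (Finset.insert_subset_insert _ hsub h')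
    have hCK : C ∈ KK s B := mem_KK.2 ⟨hC, hCB⟩
    rw [e, Finset.card_insert_of_notMem h2, Finset.card_insert_of_notMem h1, Finset.card_erase_of_mem hCK, if_pos hCB]
    have := Finset.card_pos.2 ⟨C, hCK⟩
    omega
  · have hdis : ∀ z ∈ C, z ∉ B := by
      intro z hz hzB
      apply hCB
      intro w hw
      refine hB z w ?_ hzB
      rw [cl_eq_cls hC hz] at hw
      exact mem_cls.1 hw
    have e : KK (split s S) B = KK s B := by
      ext D
      rw [mem_KK, mem_KK, cl_split hC hS hne hne']
      simp only [Finset.mem_insert, Finset.mem_erase]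
      constructor
      · rintro ⟨rfl | rfl | h, hD⟩
        · obtain ⟨z, hz⟩ := hne
          exact absurd (hD hz) (hdis z (hS hz))
        · obtain ⟨z, hz⟩ := hne'
          exact absurd (hD hz) (hdis z (Finset.sdiff_subset hz))
        · exact ⟨h.2, hD⟩
      · rintro ⟨h1, h2⟩
        exact ⟨Or.inr (Or.inr ⟨fun h => hCB (h ▸ h2), h1⟩), h2⟩
    rw [e, if_neg hCB]; rfl

theorem cls_join_sdiff {s : Setoid α} {x y : α} (h : ¬ s x y) :
    cls (join s x y) x \ cls s x = cls s y := by
  have tr := fun {a b c : α} (h : s a b) (h' : s b c) => s.trans h h'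
  have sy := fun {a b : α} (h : s a b) => s.symm h
  ext z
  rw [Finset.mem_sdiff, mem_cls, mem_cls, mem_cls, join_iff]
  constructor
  · rintro ⟨h1 | h1 | h1, h2⟩
    · exact absurd h1 h2
    · exact h1.2
    · exact absurd h1.2 h2
  · intro h1
    exact ⟨Or.inr (Or.inl ⟨s.refl x, h1⟩), fun h2 => h (tr h2 (sy h1))⟩

theorem alg1 {z P c a b f Q : ℚ} (ha : 0 < a) (hb : 0 < b) (hc : 0 < c) :
    z * P * (f * Q) = (z * c * P) * (a * b * Q) * (f / (a * b) / c) := by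
  field_simp

theorem alg2 {u v P a b Q z f : ℚ} (hz : z ≠ 0) (hf : f ≠ 0) :
    u * v * P * (a * b * Q) = z * P * (f * Q) * (a * b / f * (u * v) / z) := by
  field_simp

theorem W_join {s r : Setoid α} (hsr : s ≤ r) {x y : α} (hr : r x y) (hs : ¬ s x y) :
    W r (join s x y) = W r s * (phi ((cls s x).card + (cls s y).card) /
      (phi (cls s x).card * phi (cls s y).card) / ((cls r x).card : ℚ)) := by
  have hj : join s x y ≤ r := join_le hsr hr
  set s0 := join s x y with hs0
  have hC : cls s0 x ∈ cl s0 := cls_mem_cl _ _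
  have hS : cls s x ⊆ cls s0 x := cls_sub (le_join s x y) x
  have hsd : cls s0 x \ cls s x = cls s y := cls_join_sdiff hs
  have hne : (cls s x).Nonempty := ⟨x, self_mem_cls _ _⟩
  have hne' : (cls s0 x \ cls s x).Nonempty := by rw [hsd]; exact ⟨y, self_mem_cls _ _⟩
  have hsp : split s0 (cls s x) = s := split_join hs
  have hp := prod_cl_split hC hS hne hne' (fun D => phi D.card)
  rw [hsp, hsd] at hp
  have hcard : (cls s0 x).card = (cls s x).card + (cls s y).card := by
    rw [← hsd, Finset.card_sdiff_of_subset hS]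
    have := Finset.card_le_card hS
    omega
  have hp0 := Finset.mul_prod_erase (cl s0) (fun D => phi D.card) hC
  have hK : ∀ B ∈ cl r, (KK s B).card = (KK s0 B).card + if cls s0 x ⊆ B then 1 else 0 := by
    intro B hB
    have := card_KK_split hC hS hne hne' (sat_of_le hj hB)
    rwa [hsp] at this
  have hBr : cls r x ∈ cl r := cls_mem_cl r x
  have hxB : cls s0 x ⊆ cls r x := cls_sub hj x
  have hq1 := Finset.mul_prod_erase (cl r) (fun B => (B.card : ℚ) ^ (((KK s B).card : ℤ) - 3)) hBr
  have hq2 := Finset.mul_prod_erase (cl r) (fun B => (B.card : ℚ) ^ (((KK s0 B).card : ℤ) - 3)) hBr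
  have hq3 : ∏ B ∈ (cl r).erase (cls r x), (B.card : ℚ) ^ (((KK s B).card : ℤ) - 3)
     = ∏ B ∈ (cl r).erase (cls r x), (B.card : ℚ) ^ (((KK s0 B).card : ℤ) - 3) := by
    refine Finset.prod_congr rfl fun B hB => ?_
    rw [Finset.mem_erase] at hB
    rw [hK B hB.2, if_neg, add_zero]
    intro h
    exact hB.1 (cl_disj hB.2 hBr (h (self_mem_cls _ _)) (self_mem_cls _ _))
  have hBpos : (0 : ℚ) < (cls r x).card := by
    exact_mod_cast Finset.card_pos.2 ⟨x, self_mem_cls _ _⟩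
  have hz : ((cls r x).card : ℚ) ^ (((KK s (cls r x)).card : ℤ) - 3) =
      ((cls r x).card : ℚ) ^ (((KK s0 (cls r x)).card : ℤ) - 3) * (cls r x).card := by
    rw [hK _ hBr, if_pos hxB, ← zpow_add_one₀ hBpos.ne']
    congr 1; push_cast; ring
  unfold W
  rw [hp, ← hp0, ← hq1, ← hq2, hq3]
  rw [hz, hcard]
  have h1 := phi_pos _ (Finset.card_pos.2 ⟨x, self_mem_cls s x⟩)
  have h2 := phi_pos _ (Finset.card_pos.2 ⟨y, self_mem_cls s y⟩)
  exact alg1 h1 h2 hBpos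

theorem filter_sub {s : Setoid α} {C C1 C2 : Finset α} (hC : C ∈ cl s) (h1 : C1 ⊆ C) (h2 : C2 ⊆ C)
    (hd : Disjoint C1 C2) (hne2 : C2.Nonempty) {I : Finset (Finset α)} (hI : I ⊆ (cl s).erase C) :
    (insert C1 (insert C2 ((cl s).erase C))).filter (· ⊆ C1 ∪ I.biUnion id) = insert C1 I := by
  ext D
  simp only [Finset.mem_filter, Finset.mem_insert]
  have hIC : ∀ E ∈ I, ∀ z ∈ E, z ∉ C := by
    intro E hE z hz hzC
    have := Finset.mem_erase.1 (hI hE)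
    exact this.1 (cl_disj this.2 hC hz hzC)
  constructor
  · rintro ⟨rfl | rfl | h, hD⟩
    · exact Or.inl rfl
    · obtain ⟨z, hz⟩ := hne2
      have := hD hz
      rw [Finset.mem_union, Finset.mem_biUnion] at this
      rcases this with h | ⟨E, hE, hzE⟩
      · exact absurd hz (Finset.disjoint_left.1 hd h)
      · exact absurd (h2 hz) (hIC E hE z hzE)
    · right
      rw [Finset.mem_erase] at h
      obtain ⟨z, hz⟩ := cl_nonempty h.2
      have := hD hz
      rw [Finset.mem_union, Finset.mem_biUnion] at this
      rcases this with h' | ⟨E, hE, hzE⟩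
      · exact absurd (cl_disj h.2 hC hz (h1 h')) h.1
      · have := cl_disj h.2 (Finset.mem_erase.1 (hI hE)).2 hz hzE
        rwa [this]
  · rintro (rfl | h)
    · exact ⟨Or.inl rfl, Finset.subset_union_left⟩
    · refine ⟨Or.inr (Or.inr (hI h)), ?_⟩
      exact (Finset.subset_biUnion_of_mem id h).trans Finset.subset_union_right

theorem card_un {s : Setoid α} {C C1 : Finset α} (hC : C ∈ cl s) (h1 : C1 ⊆ C)
    {I : Finset (Finset α)} (hI : I ⊆ (cl s).erase C) :
    (C1 ∪ I.biUnion id).card = C1.card + ∑ D ∈ I, D.card := by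
  rw [Finset.card_union_of_disjoint, Finset.card_biUnion]
  · rfl
  · intro D hD E hE hne
    rw [Function.onFun, Finset.disjoint_left]
    intro z hz hz'
    exact hne (cl_disj (Finset.mem_erase.1 (hI hD)).2 (Finset.mem_erase.1 (hI hE)).2 hz hz')
  · rw [Finset.disjoint_left]
    intro z hz hz'
    rw [Finset.mem_biUnion] at hz'
    obtain ⟨E, hE, hzE⟩ := hz'
    exact (Finset.mem_erase.1 (hI hE)).1 (cl_disj (Finset.mem_erase.1 (hI hE)).2 hC hzE (h1 hz))

theorem sdiff_un {s r : Setoid α} (hsr : s ≤ r) {B C C1 : Finset α} (hB : B ∈ cl r) (hC : C ∈ KK s B)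
    (h1 : C1 ⊆ C) {I : Finset (Finset α)} (hI : I ⊆ (KK s B).erase C) :
    B \ (C1 ∪ I.biUnion id) = (C \ C1) ∪ (((KK s B).erase C) \ I).biUnion id := by
  ext z
  simp only [Finset.mem_sdiff, Finset.mem_union, Finset.mem_biUnion, id, not_or, not_exists, not_and]
  have hCc := mem_KK.1 hC
  constructor
  · rintro ⟨hz, hz1, hz2⟩
    by_cases hzC : z ∈ C
    · exact Or.inl ⟨hzC, hz1⟩
    · right
      refine ⟨cls s z, ⟨Finset.mem_erase.2 ⟨fun h => hzC (h ▸ self_mem_cls s z), cls_mem_KK (sat_of_le hsr hB) hz⟩,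
        fun h => hz2 _ h (self_mem_cls s z)⟩, self_mem_cls s z⟩
  · rintro (⟨h, h'⟩ | ⟨D, ⟨hD, hDI⟩, hz⟩)
    · refine ⟨hCc.2 h, h', ?_⟩
      intro E hE hzE
      have := Finset.mem_erase.1 (hI hE)
      exact this.1 (cl_disj (mem_KK.1 this.2).1 hCc.1 hzE h)
    · rw [Finset.mem_erase, mem_KK] at hD
      refine ⟨hD.2.2 hz, ?_, ?_⟩
      · intro hz1
        exact hD.1 (cl_disj hD.2.1 hCc.1 hz (h1 hz1))
      · intro E hE hzE
        have := Finset.mem_erase.1 (hI hE)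
        have e := cl_disj (mem_KK.1 this.2).1 hD.2.1 hzE hz
        exact hDI (e ▸ hE)

theorem W_split {s r : Setoid α} (hsr : s ≤ r) {B C C1 : Finset α} (hB : B ∈ cl r) (hC : C ∈ KK s B)
    (h1 : C1 ⊆ C) (hne : C1.Nonempty) (hne' : (C \ C1).Nonempty)
    {I : Finset (Finset α)} (hI : I ⊆ (KK s B).erase C) :
    W (split r (C1 ∪ I.biUnion id)) (split s C1) =
      W r s * (phi C1.card * phi (C.card - C1.card) / phi C.card *
       (((C1.card : ℚ) + ∑ D ∈ I, (D.card : ℚ)) ^ ((I.card : ℤ) - 2) *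
       (((C.card - C1.card : ℕ) : ℚ) + ∑ D ∈ (KK s B).erase C \ I, (D.card : ℚ)) ^
        ((((KK s B).erase C \ I).card : ℤ) - 2)) / (B.card : ℚ) ^ (((KK s B).card : ℤ) - 3)) := by
  have hCc := mem_KK.1 hC
  have hsub : (KK s B).erase C ⊆ (cl s).erase C :=
      Finset.erase_subset_erase _ (Finset.filter_subset _ _)
  set S := C1 ∪ I.biUnion id with hSd
  set J := (KK s B).erase C \ I with hJd
  have hI' : I ⊆ (cl s).erase C := hI.trans hsub
  have hJ' : J ⊆ (cl s).erase C := Finset.sdiff_subset.trans hsub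
  have hBS : B \ S = (C \ C1) ∪ J.biUnion id := sdiff_un hsr hB hC h1 hI
  have hSB : S ⊆ B := by
    apply Finset.union_subset (h1.trans hCc.2)
    intro z hz
    rw [Finset.mem_biUnion] at hz
    obtain ⟨E, hE, hzE⟩ := hz
    exact (mem_KK.1 (Finset.mem_erase.1 (hI hE)).2).2 hzE
  have hSne : S.Nonempty := hne.mono Finset.subset_union_left
  have hSne' : (B \ S).Nonempty := by
    rw [hBS]; exact hne'.mono Finset.subset_union_left
  have hdis : Disjoint C1 (C \ C1) := Finset.disjoint_sdiff
  have hk1 : KK (split s C1) S = insert C1 I := by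
    rw [KK, cl_split hCc.1 h1 hne hne']
    exact filter_sub hCc.1 h1 Finset.sdiff_subset hdis hne' hI'
  have hk2 : KK (split s C1) (B \ S) = insert (C \ C1) J := by
    rw [KK, cl_split hCc.1 h1 hne hne', Finset.insert_comm, hBS]
    exact filter_sub hCc.1 Finset.sdiff_subset h1 hdis.symm hne hJ'
  have hc1 : (KK (split s C1) S).card = I.card + 1 := by
    rw [hk1, Finset.card_insert_of_notMem]
    intro h
    obtain ⟨z, hz⟩ := hne
    have := Finset.mem_erase.1 (hI' h)
    exact this.1 (cl_disj this.2 hCc.1 hz (h1 hz))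
  have hc2 : (KK (split s C1) (B \ S)).card = J.card + 1 := by
    rw [hk2, Finset.card_insert_of_notMem]
    intro h
    obtain ⟨z, hz⟩ := hne'
    have := Finset.mem_erase.1 (hJ' h)
    exact this.1 (cl_disj this.2 hCc.1 hz (Finset.sdiff_subset hz))
  have hcS : (S.card : ℚ) = (C1.card : ℚ) + ∑ D ∈ I, (D.card : ℚ) := by
    rw [hSd, card_un hCc.1 h1 hI']; push_cast; rfl
  have hcS' : ((B \ S).card : ℚ) = ((C.card - C1.card : ℕ) : ℚ) + ∑ D ∈ J, (D.card : ℚ) := by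
    rw [hBS, card_un hCc.1 Finset.sdiff_subset hJ', Finset.card_sdiff_of_subset h1]; push_cast; rfl
  have hq3 : ∏ B' ∈ (cl r).erase B, (B'.card : ℚ) ^ (((KK (split s C1) B').card : ℤ) - 3)
     = ∏ B' ∈ (cl r).erase B, (B'.card : ℚ) ^ (((KK s B').card : ℤ) - 3) := by
    refine Finset.prod_congr rfl fun B' hB' => ?_
    rw [Finset.mem_erase] at hB'
    rw [card_KK_split hCc.1 h1 hne hne' (sat_of_le hsr hB'.2), if_neg, add_zero]
    intro h
    obtain ⟨z, hz⟩ := hne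
    exact hB'.1 (cl_disj hB'.2 hB (h (h1 hz)) (hCc.2 (h1 hz)))
  unfold W
  rw [prod_cl_split hB hSB hSne hSne' (fun B' => (B'.card : ℚ) ^ (((KK (split s C1) B').card : ℤ) - 3)),
    prod_cl_split hCc.1 h1 hne hne' (fun D => phi D.card), hq3,
    ← Finset.mul_prod_erase (cl r) (fun B => (B.card : ℚ) ^ (((KK s B).card : ℤ) - 3)) hB,
    ← Finset.mul_prod_erase (cl s) (fun D => phi D.card) hCc.1]
  rw [hc1, hc2, hcS, hcS', Finset.card_sdiff_of_subset h1]
  have hBpos : (0 : ℚ) < B.card := by exact_mod_cast Finset.card_pos.2 (cl_nonempty hB)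
  have hz := (zpow_pos hBpos (((KK s B).card : ℤ) - 3)).ne'
  have hphi := (phi_pos _ (Finset.card_pos.2 (cl_nonempty hCc.1))).ne'
  rw [show ((I.card + 1 : ℕ) : ℤ) - 3 = (I.card : ℤ) - 2 by push_cast; ring,
    show ((J.card + 1 : ℕ) : ℤ) - 3 = (J.card : ℤ) - 2 by push_cast; ring]
  exact alg2 hz hphi

open Classical in
theorem sum_split {s r : Setoid α} (hsr : s ≤ r) {B C C1 : Finset α} (hB : B ∈ cl r) (hC : C ∈ KK s B)
    (h1 : C1 ⊆ C) {x y : α} (hx : x ∈ C1) (hyC : y ∈ C) (hy : y ∉ C1) :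
    ∑ S ∈ Finset.univ.filter (fun S : Finset α => x ∈ S ∧ y ∉ S ∧ S ⊆ cls r x ∧ split s C1 ≤ split r S),
      W (split r S) (split s C1) =
      W r s * (phi C1.card * phi (C.card - C1.card) / phi C.card *
        SS (fun D : Finset α => (D.card : ℚ)) ((KK s B).erase C) (C1.card : ℚ) ((C.card - C1.card : ℕ) : ℚ)
         / (B.card : ℚ) ^ (((KK s B).card : ℤ) - 3)) := by
  have hCc := mem_KK.1 hC
  have hBx : B = cls r x := cl_eq_cls hB (hCc.2 (h1 hx))
  have hsub : (KK s B).erase C ⊆ (cl s).erase C :=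
      Finset.erase_subset_erase _ (Finset.filter_subset _ _)
  have hne : C1.Nonempty := ⟨x, hx⟩
  have hne' : (C \ C1).Nonempty := ⟨y, Finset.mem_sdiff.2 ⟨hyC, hy⟩⟩
  have key : ∑ S ∈ Finset.univ.filter (fun S : Finset α => x ∈ S ∧ y ∉ S ∧ S ⊆ cls r x ∧ split s C1 ≤ split r S),
      W (split r S) (split s C1) = ∑ I ∈ ((KK s B).erase C).powerset, W (split r (C1 ∪ I.biUnion id)) (split s C1) := by
    symm
    refine Finset.sum_bij' (fun I _ => C1 ∪ I.biUnion id) (fun S _ => ((KK s B).erase C).filter (· ⊆ S)) ?_ ?_ ?_ ?_ ?_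
    · intro I hI
      rw [Finset.mem_powerset] at hI
      rw [Finset.mem_filter]
      refine ⟨Finset.mem_univ _, Finset.mem_union_left _ hx, ?_, ?_, ?_⟩
      · have : y ∈ B \ (C1 ∪ I.biUnion id) := by
          rw [sdiff_un hsr hB hC h1 hI]
          exact Finset.mem_union_left _ (Finset.mem_sdiff.2 ⟨hyC, hy⟩)
        exact (Finset.mem_sdiff.1 this).2
      · rw [← hBx]
        apply Finset.union_subset (h1.trans hCc.2)
        intro z hz
        rw [Finset.mem_biUnion] at hz
        obtain ⟨E, hE, hzE⟩ := hz
        exact (mem_KK.1 (Finset.mem_erase.1 (hI hE)).2).2 hzE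
      · have hsat : ∀ a b, split s C1 a b → a ∈ C1 ∪ I.biUnion id → b ∈ C1 ∪ I.biUnion id := by
          intro a b hab ha
          rw [Finset.mem_union, Finset.mem_biUnion] at *
          rcases ha with ha | ⟨E, hE, haE⟩
          · exact Or.inl (hab.2.1 ha)
          · refine Or.inr ⟨E, hE, ?_⟩
            have := (mem_KK.1 (Finset.mem_erase.1 (hI hE)).2).1
            simp only [id] at *
            rw [cl_eq_cls this haE, mem_cls]
            exact hab.1
        intro a b hab
        exact ⟨hsr hab.1, hsat a b hab, hsat b a ((split s C1).symm hab)⟩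
    · intro S _
      exact Finset.mem_powerset.2 (Finset.filter_subset _ _)
    · intro I hI
      rw [Finset.mem_powerset] at hI
      have := filter_sub hCc.1 h1 Finset.sdiff_subset Finset.disjoint_sdiff hne' (hI.trans hsub)
      ext D
      rw [Finset.mem_filter]
      constructor
      · rintro ⟨hD, hDS⟩
        have hm : D ∈ insert C1 I := by
          rw [← this, Finset.mem_filter]
          exact ⟨Finset.mem_insert_of_mem (Finset.mem_insert_of_mem (hsub hD)), hDS⟩
        rcases Finset.mem_insert.1 hm with h | h
        · exfalso
          have hD' := Finset.mem_erase.1 (hsub hD)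
          exact hD'.1 (cl_disj hD'.2 hCc.1 (h ▸ hx) (h1 hx))
        · exact h
      · intro hD
        exact ⟨hI hD, (Finset.subset_biUnion_of_mem id hD).trans Finset.subset_union_right⟩
    · intro S hS
      rw [Finset.mem_filter] at hS
      obtain ⟨-, hxS, hyS, hSB, hle⟩ := hS
      rw [← hBx] at hSB
      have hsat : ∀ a b, split s C1 a b → a ∈ S → b ∈ S := fun a b hab ha => (hle hab).2.1 ha
      have hCx : ∀ z ∈ C, s x z := by
        intro z hz
        rw [cl_eq_cls hCc.1 (h1 hx)] at hz
        exact mem_cls.1 hz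
      ext z
      rw [Finset.mem_union, Finset.mem_biUnion]
      constructor
      · rintro (hz | ⟨E, hE, hzE⟩)
        · exact hsat x z ⟨hCx z (h1 hz), by simp [hx, hz]⟩ hxS
        · exact (Finset.mem_filter.1 hE).2 hzE
      · intro hz
        by_cases hzC : z ∈ C
        · left
          by_contra hz1
          exact hyS (hsat z y ⟨s.trans (s.symm (hCx z hzC)) (hCx y hyC), by simp [hz1, hy]⟩ hz)
        · right
          refine ⟨cls s z, Finset.mem_filter.2 ⟨Finset.mem_erase.2 ⟨fun h => hzC (h ▸ self_mem_cls s z),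
            cls_mem_KK (sat_of_le hsr hB) (hSB hz)⟩, ?_⟩, self_mem_cls s z⟩
          intro w hw
          rw [mem_cls] at hw
          refine hsat z w ⟨hw, ?_⟩ hz
          have hz1 : z ∉ C1 := fun h => hzC (h1 h)
          have hw1 : w ∉ C1 := by
            intro h
            apply hzC
            rw [cl_eq_cls hCc.1 (h1 h), mem_cls]
            exact s.symm hw
          simp [hz1, hw1]
    · intros; rfl
  rw [key, Finset.sum_congr rfl (fun I hI => W_split hsr hB hC h1 hne hne' (Finset.mem_powerset.1 hI)),
    ← Finset.mul_sum, ← Finset.sum_div, ← Finset.mul_sum, SS]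

end HZ

namespace HZ

set_option linter.unusedSectionVars false

variable {α : Type*} [Fintype α] [DecidableEq α]

/-- cycle partition -/
def cyc (σ : Perm α) : Setoid α := Equiv.Perm.SameCycle.setoid σ

theorem cyc_iff {σ : Perm α} {a b : α} : cyc σ a b ↔ ∃ i : ℕ, (σ ^ i) a = b := by
  constructor
  · intro h
    have h' : σ.SameCycle a b := h
    obtain ⟨i, _, hi⟩ := h'.exists_pow_eq'
    exact ⟨i, hi⟩
  · rintro ⟨i, hi⟩
    exact (⟨(i : ℤ), by simpa using hi⟩ : σ.SameCycle a b)

theorem cyc_le_iff {σ : Perm α} {t : Setoid α} : cyc σ ≤ t ↔ ∀ a, t a (σ a) := by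
  constructor
  · intro h a
    exact h (cyc_iff.2 ⟨1, by simp⟩)
  · intro h a b hab
    obtain ⟨i, rfl⟩ := cyc_iff.1 hab
    clear hab
    induction i with
    | zero => exact t.refl a
    | succ i ih =>
      rw [pow_succ', Perm.mul_apply]
      exact t.trans ih (h _)

theorem cyc_apply (σ : Perm α) (a : α) : cyc σ a (σ a) := cyc_le_iff.1 le_rfl a

theorem rel_swap {t : Setoid α} {x y : α} (h : t x y) (c : α) : t c (swap x y c) := by
  by_cases hx : c = x
  · subst hx; rw [swap_apply_left]; exact h
  · by_cases hy : c = y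
    · subst hy; rw [swap_apply_right]; exact t.symm h
    · rw [swap_apply_of_ne_of_ne hx hy]

theorem cyc_swap_le (σ : Perm α) (x y : α) : cyc (swap x y * σ) ≤ join (cyc σ) x y := by
  rw [cyc_le_iff]
  intro a
  rw [Perm.mul_apply]
  exact Setoid.trans' _ (le_join _ x y (cyc_apply σ a)) (rel_swap (join_xy _ _ _) _)

theorem cyc_le_swap (σ : Perm α) (x y : α) : cyc σ ≤ join (cyc (swap x y * σ)) x y := by
  have := cyc_swap_le (swap x y * σ) x y
  rwa [← mul_assoc, swap_mul_self, one_mul] at this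

theorem exists_per (σ : Perm α) (x : α) : ∃ p, 0 < p ∧ (σ ^ p) x = x ∧ ∀ i, 0 < i → i < p → (σ ^ i) x ≠ x := by
  classical
  have h : ∃ p, 0 < p ∧ (σ ^ p) x = x := ⟨orderOf σ, orderOf_pos σ, by rw [pow_orderOf_eq_one]; rfl⟩
  refine ⟨Nat.find h, (Nat.find_spec h).1, (Nat.find_spec h).2, ?_⟩
  intro i hi hip h2
  exact Nat.find_min h hip ⟨hi, h2⟩

theorem per_inj {σ : Perm α} {x : α} {p : ℕ} (h : ∀ i, 0 < i → i < p → (σ ^ i) x ≠ x) {i j : ℕ}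
    (hi : i < p) (hj : j < p) (hij : (σ ^ i) x = (σ ^ j) x) : i = j := by
  wlog hle : i ≤ j generalizing i j
  · exact (this hj hi hij.symm (by omega)).symm
  by_contra hne
  apply h (j - i) (by omega) (by omega)
  have : σ ^ j = σ ^ i * σ ^ (j - i) := by rw [← pow_add]; congr 1; omega
  rw [this, Perm.mul_apply] at hij
  exact ((σ ^ i).injective hij).symm

theorem cls_cyc {σ : Perm α} {x : α} {p : ℕ} (hp : 0 < p) (hx : (σ ^ p) x = x) :
    cls (cyc σ) x = (Finset.range p).image (fun i => (σ ^ i) x) := by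
  ext z
  rw [mem_cls, cyc_iff]
  simp only [Finset.mem_image, Finset.mem_range]
  constructor
  · rintro ⟨i, rfl⟩
    refine ⟨i % p, Nat.mod_lt _ hp, ?_⟩
    conv_rhs => rw [← Nat.mod_add_div i p]
    rw [pow_add, Perm.mul_apply, pow_mul]
    congr 1
    generalize i / p = k
    induction k with
    | zero => simp
    | succ k ih => rw [pow_succ, Perm.mul_apply, hx, ← ih]
  · rintro ⟨i, _, h⟩; exact ⟨i, h⟩

theorem card_cls_cyc {σ : Perm α} {x : α} {p : ℕ} (hp : 0 < p) (hx : (σ ^ p) x = x)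
    (h : ∀ i, 0 < i → i < p → (σ ^ i) x ≠ x) : (cls (cyc σ) x).card = p := by
  rw [cls_cyc hp hx, Finset.card_image_of_injOn, Finset.card_range]
  intro i hi j hj hij
  exact per_inj h (by simpa using hi) (by simpa using hj) hij

theorem swap_pow {σ : Perm α} {x y : α} {k : ℕ}
    (h : ∀ i, 0 < i → i < k → (σ ^ i) x ≠ x ∧ (σ ^ i) x ≠ y) {i : ℕ} (hi : i < k) :
    ((swap x y * σ) ^ i) x = (σ ^ i) x := by
  induction i with
  | zero => rfl
  | succ i ih =>
    rw [pow_succ', Perm.mul_apply, ih (by omega), Perm.mul_apply, ← Perm.mul_apply σ, ← pow_succ']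
    have := h (i + 1) (by omega) hi
    exact swap_apply_of_ne_of_ne this.1 this.2

theorem swap_pow' {σ : Perm α} {x y : α} {k : ℕ} (hk : 0 < k)
    (h : ∀ i, 0 < i → i < k → (σ ^ i) x ≠ x ∧ (σ ^ i) x ≠ y) :
    ((swap x y * σ) ^ k) x = swap x y ((σ ^ k) x) := by
  obtain ⟨i, rfl⟩ : ∃ i, k = i + 1 := ⟨k - 1, by omega⟩
  rw [pow_succ', Perm.mul_apply, swap_pow h (by omega), Perm.mul_apply, ← Perm.mul_apply σ, ← pow_succ']

theorem cyc_join {σ : Perm α} {x y : α} (h : ¬ cyc σ x y) : cyc (swap x y * σ) = join (cyc σ) x y := by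
  apply le_antisymm (cyc_swap_le σ x y)
  obtain ⟨p, hp, hx, hmin⟩ := exists_per σ x
  have hne : ∀ i, 0 < i → i < p → (σ ^ i) x ≠ x ∧ (σ ^ i) x ≠ y :=
    fun i h1 h2 => ⟨hmin i h1 h2, fun h3 => h (cyc_iff.2 ⟨i, h3⟩)⟩
  have h2 : cyc (swap x y * σ) x y := cyc_iff.2 ⟨p, by rw [swap_pow' hp hne, hx, swap_apply_left]⟩
  have := cyc_le_swap σ x y
  rw [join_self h2] at this
  exact join_le this h2

/-- a cycle is cut -/
theorem cyc_cut {σ : Perm α} {x : α} {p k : ℕ} (hmin : ∀ i, 0 < i → i < p → (σ ^ i) x ≠ x)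
    (hk : 0 < k) (hkp : k < p) :
    (cls (cyc (swap x ((σ ^ k) x) * σ)) x).card = k ∧
    ¬ cyc (swap x ((σ ^ k) x) * σ) x ((σ ^ k) x) ∧
    cls (cyc (swap x ((σ ^ k) x) * σ)) x ⊆ cls (cyc σ) x ∧
    cyc (swap x ((σ ^ k) x) * σ) = split (cyc σ) (cls (cyc (swap x ((σ ^ k) x) * σ)) x) := by
  set y := (σ ^ k) x with hy
  have hne : ∀ i, 0 < i → i < k → (σ ^ i) x ≠ x ∧ (σ ^ i) x ≠ y :=
    fun i h1 h2 => ⟨hmin i h1 (by omega), fun h3 => by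
      have := per_inj hmin (by omega) hkp h3
      omega⟩
  have e1 : ((swap x y * σ) ^ k) x = x := by rw [swap_pow' hk hne, ← hy, swap_apply_right]
  have e2 : ∀ i, 0 < i → i < k → ((swap x y * σ) ^ i) x ≠ x := by
    intro i h1 h2
    rw [swap_pow hne h2]
    exact (hne i h1 h2).1
  have hn : ¬ cyc (swap x y * σ) x y := by
    rw [← mem_cls, cls_cyc hk e1]
    simp only [Finset.mem_image, Finset.mem_range, not_exists, not_and]
    intro i hi
    rw [swap_pow hne hi]
    rcases Nat.eq_zero_or_pos i with rfl | h0
    · intro h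
      exact hmin k hk hkp (hy ▸ h.symm)
    · exact (hne i h0 hi).2
  have hxy : cyc σ x y := cyc_iff.2 ⟨k, rfl⟩
  have hle : cyc (swap x y * σ) ≤ cyc σ := by
    have := cyc_swap_le σ x y
    rwa [join_self hxy] at this
  have hj : join (cyc (swap x y * σ)) x y = cyc σ :=
    le_antisymm (join_le hle hxy) (cyc_le_swap σ x y)
  refine ⟨card_cls_cyc hk e1 e2, hn, cls_sub hle x, ?_⟩
  have := split_join hn
  rw [hj] at this
  exact this.symm

/-- summing over other points of a cycle -/
theorem sum_cyc {σ : Perm α} {x : α} {p : ℕ} (hp : 0 < p) (hx : (σ ^ p) x = x)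
    (h : ∀ i, 0 < i → i < p → (σ ^ i) x ≠ x) (f : α → ℚ) :
    ∑ y ∈ (cls (cyc σ) x).erase x, f y = ∑ k ∈ Finset.Ico 1 p, f ((σ ^ k) x) := by
  symm
  refine Finset.sum_bij (fun k _ => (σ ^ k) x) ?_ ?_ ?_ ?_
  · intro k hk
    rw [Finset.mem_Ico] at hk
    rw [Finset.mem_erase, mem_cls, cyc_iff]
    exact ⟨h k (by omega) hk.2, k, rfl⟩
  · intro i hi j hj hij
    rw [Finset.mem_Ico] at hi hj
    exact per_inj h hi.2 hj.2 hij
  · intro y hy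
    rw [Finset.mem_erase, cls_cyc hp hx] at hy
    simp only [Finset.mem_image, Finset.mem_range] at hy
    obtain ⟨hne, i, hi, rfl⟩ := hy
    refine ⟨i, ?_, rfl⟩
    rw [Finset.mem_Ico]
    refine ⟨?_, hi⟩
    by_contra h0
    have : i = 0 := by omega
    subst this
    exact hne rfl
  · intro _ _; rfl

end HZ

namespace HZ

set_option linter.unusedSectionVars false

variable {α : Type*} [Fintype α] [DecidableEq α]

open Classical in
/-- the contribution of one ordered pair -/
noncomputable def TT (r : Setoid α) (σ : Perm α) (x y : α) : ℚ :=
  if cyc σ x y then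
    ∑ S ∈ Finset.univ.filter (fun S : Finset α => x ∈ S ∧ y ∉ S ∧ S ⊆ cls r x ∧
      cyc (swap x y * σ) ≤ split r S), W (split r S) (cyc (swap x y * σ))
  else if r x y then W r (cyc (swap x y * σ)) else 0

/-- row sums -/
noncomputable def gg (s : Setoid α) (B C : Finset α) : ℚ :=
  ∑ C' ∈ (KK s B).erase C, (C'.card : ℚ) * (phi (C.card + C'.card) / (phi C.card * phi C'.card)
    / (B.card : ℚ)) +
  ∑ k ∈ Finset.Ico 1 C.card, (phi k * phi (C.card - k) / phi C.card *
        SS (fun D : Finset α => (D.card : ℚ)) ((KK s B).erase C) (k : ℚ) ((C.card - k : ℕ) : ℚ)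
         / (B.card : ℚ) ^ (((KK s B).card : ℤ) - 3))

theorem row {r : Setoid α} {σ : Perm α} (h : cyc σ ≤ r) (x : α) :
    ∑ y ∈ Finset.univ.erase x, TT r σ x y = W r (cyc σ) * gg (cyc σ) (cls r x) (cls (cyc σ) x) := by
  classical
  have hB : cls r x ∈ cl r := cls_mem_cl r x
  have hsat := sat_of_le h hB
  have hC : cls (cyc σ) x ∈ KK (cyc σ) (cls r x) := cls_mem_KK hsat (self_mem_cls _ _)
  have e1 : ∑ y ∈ Finset.univ.erase x, TT r σ x y =
      ∑ y ∈ cls r x, if y = x then 0 else TT r σ x y := by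
    have : ∑ y ∈ Finset.univ.erase x, TT r σ x y =
        ∑ y, if y = x then 0 else TT r σ x y := by
      rw [← Finset.sum_erase Finset.univ (a := x) (by simp)]
      refine Finset.sum_congr rfl fun y hy => ?_
      rw [if_neg (Finset.ne_of_mem_erase hy)]
    rw [this]
    symm
    apply Finset.sum_subset (Finset.subset_univ _)
    intro y _ hy
    rw [mem_cls] at hy
    split_ifs
    · rfl
    · rw [TT, if_neg (fun h' => hy (h h')), if_neg hy]
  rw [e1, ← sum_KK hsat, ← Finset.add_sum_erase _ _ hC, gg, mul_add, add_comm]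
  congr 1
  · rw [Finset.mul_sum]
    refine Finset.sum_congr rfl fun C' hC' => ?_
    rw [Finset.mem_erase, mem_KK] at hC'
    have : ∀ y ∈ C', (if y = x then 0 else TT r σ x y) = W r (cyc σ) *
        (phi ((cls (cyc σ) x).card + C'.card) / (phi (cls (cyc σ) x).card * phi C'.card)
          / ((cls r x).card : ℚ)) := by
      intro y hy
      have hyc : C' = cls (cyc σ) y := cl_eq_cls hC'.2.1 hy
      have hn : ¬ cyc σ x y := fun h' => hC'.1 (by rw [hyc, cls_eq h'])
      have hr : r x y := mem_cls.1 (hC'.2.2 hy)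
      rw [if_neg (fun h' => hn (by rw [h'])), TT, if_neg hn, if_pos hr, cyc_join hn,
        W_join h hr hn, hyc]
    rw [Finset.sum_congr rfl this, Finset.sum_const, nsmul_eq_mul]
    ring
  · obtain ⟨p, hp, hx, hmin⟩ := exists_per σ x
    have hcard := card_cls_cyc hp hx hmin
    rw [← Finset.sum_erase (cls (cyc σ) x) (a := x) (by simp), sum_cyc hp hx hmin, Finset.mul_sum, hcard]
    refine Finset.sum_congr rfl fun k hk => ?_
    rw [Finset.mem_Ico] at hk
    obtain ⟨c1, c2, c3, c4⟩ := cyc_cut hmin (by omega : 0 < k) hk.2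
    have hxy : cyc σ x ((σ ^ k) x) := cyc_iff.2 ⟨k, rfl⟩
    rw [if_neg (hmin k (by omega) hk.2), TT, if_pos hxy]
    have := sum_split h hB hC c3 (self_mem_cls _ x) (mem_cls.2 hxy) (fun h' => c2 (mem_cls.1 h'))
    rw [← c4, c1, hcard] at this
    rw [← this]

theorem step {r : Setoid α} {σ : Perm α} (h : cyc σ ≤ r) :
    ∑ x, ∑ y ∈ Finset.univ.erase x, TT r σ x y =
     2 * ((Fintype.card α : ℚ) + (cl (cyc σ)).card - 2 * (cl r).card) * W r (cyc σ) := by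
  rw [Finset.sum_congr rfl (fun x _ => row h x), ← Finset.mul_sum, mul_comm]
  congr 1
  rw [← sum_cl r]
  have hb : ∀ B ∈ cl r, ∑ x ∈ B, gg (cyc σ) (cls r x) (cls (cyc σ) x) =
      2 * ((B.card : ℚ) + (KK (cyc σ) B).card - 2) := by
    intro B hB
    have hsat := sat_of_le h hB
    obtain ⟨b, hb⟩ := cl_nonempty hB
    rw [← sum_KK hsat]
    have e : ∀ C ∈ KK (cyc σ) B, ∑ x ∈ C, gg (cyc σ) (cls r x) (cls (cyc σ) x) =
        C.card * gg (cyc σ) B C := by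
      intro C hC
      rw [mem_KK] at hC
      rw [Finset.sum_congr rfl (g := fun _ => gg (cyc σ) B C), Finset.sum_const, nsmul_eq_mul]
      intro x hx
      rw [← cl_eq_cls hC.1 hx, ← cl_eq_cls hB (hC.2 hx)]
    rw [Finset.sum_congr rfl e]
    have hbl := block (fun C : Finset α => C.card) (KK (cyc σ) B)
      (fun C hC => Finset.card_pos.2 (cl_nonempty (mem_KK.1 hC).1)) ⟨_, cls_mem_KK hsat hb⟩
    rw [card_KK hsat] at hbl
    rw [← hbl, ← Finset.sum_add_distrib]
    refine Finset.sum_congr rfl fun C hC => ?_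
    rw [gg, mul_add, Finset.mul_sum]
    congr 1
    refine Finset.sum_congr rfl fun C' hC' => ?_
    ring
  rw [Finset.sum_congr rfl hb, ← Finset.mul_sum, Finset.sum_sub_distrib, Finset.sum_add_distrib]
  have h1 : ∑ B ∈ cl r, (B.card : ℚ) = Fintype.card α := by
    have := sum_cl r (fun _ => (1 : ℚ))
    simpa using this
  have h2 : ∑ B ∈ cl r, ((KK (cyc σ) B).card : ℚ) = (cl (cyc σ)).card := by
    exact_mod_cast card_cl_KK h
  rw [h1, h2, Finset.sum_const, nsmul_eq_mul]
  ring

end HZ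

namespace HZ

set_option linter.unusedSectionVars false

variable {α : Type*} [Fintype α] [DecidableEq α]

/-- orbit partition of the subgroup generated by a set -/
def orb (S : Set (Perm α)) : Setoid α where
  r a b := ∃ g ∈ Subgroup.closure S, g a = b
  iseqv := by
    refine ⟨fun a => ⟨1, one_mem _, rfl⟩, ?_, ?_⟩
    · rintro a b ⟨g, hg, rfl⟩
      exact ⟨g⁻¹, inv_mem hg, by simp⟩
    · rintro a b c ⟨g, hg, rfl⟩ ⟨h, hh, rfl⟩
      exact ⟨h * g, mul_mem hh hg, rfl⟩

theorem orb_iff {S : Set (Perm α)} {a b : α} : orb S a b ↔ ∃ g ∈ Subgroup.closure S, g a = b := Iff.rfl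

theorem orb_le_iff {S : Set (Perm α)} {t : Setoid α} : orb S ≤ t ↔ ∀ g ∈ S, ∀ a, t a (g a) := by
  constructor
  · intro h g hg a
    exact h (orb_iff.2 ⟨g, Subgroup.subset_closure hg, rfl⟩)
  · intro h a b hab
    obtain ⟨g, hg, rfl⟩ := orb_iff.1 hab
    clear hab
    induction hg using Subgroup.closure_induction generalizing a with
    | mem g hg => exact h g hg a
    | one => exact t.refl a
    | mul g k _ _ h1 h2 => exact Setoid.trans' t (h2 (a := a)) (h1 (a := k a))
    | inv g _ h1 =>
      have := h1 (a := g⁻¹ a)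
      rw [← Perm.mul_apply, mul_inv_cancel, Perm.one_apply] at this
      exact t.symm this

theorem orb_insert (S : Set (Perm α)) (x y : α) : orb (insert (swap x y) S) = join (orb S) x y := by
  apply le_antisymm
  · rw [orb_le_iff]
    intro g hg a
    rcases hg with rfl | hg
    · exact rel_swap (join_xy _ _ _) a
    · exact le_join _ x y (orb_le_iff.1 le_rfl g hg a)
  · apply join_le
    · rw [orb_le_iff]
      intro g hg a
      exact orb_le_iff.1 le_rfl g (Set.mem_insert_of_mem _ hg) a
    · have := orb_le_iff.1 (le_refl (orb (insert (swap x y) S))) (swap x y) (Set.mem_insert _ _) x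
      rwa [swap_apply_left] at this

theorem cyc_le_orb {S : Set (Perm α)} {σ : Perm α} (h : σ ∈ Subgroup.closure S) : cyc σ ≤ orb S := by
  rw [cyc_le_iff]
  intro a
  exact ⟨σ, h, rfl⟩

theorem prod_mem {m : ℕ} (t : Fin m → Perm α) : (List.ofFn t).prod ∈ Subgroup.closure (Set.range t) := by
  apply Subgroup.list_prod_mem
  intro g hg
  rw [List.mem_ofFn] at hg
  exact Subgroup.subset_closure hg

open Classical in
/-- number of factorizations with given orbit partition -/
noncomputable def N (m : ℕ) (r : Setoid α) (σ : Perm α) : ℚ :=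
  ∑ t : Fin m → Perm α, if (∀ i, (t i).IsSwap) ∧ (List.ofFn t).prod = σ ∧ orb (Set.range t) = r then 1 else 0

theorem N_zero {m : ℕ} {r : Setoid α} {σ : Perm α} (h : ¬ cyc σ ≤ r) : N m r σ = 0 := by
  classical
  apply Finset.sum_eq_zero
  intro t _
  rw [if_neg]
  rintro ⟨_, rfl, rfl⟩
  exact h (cyc_le_orb (prod_mem t))

theorem ind_mul (P Q : Prop) [Decidable P] [Decidable Q] :
    (if P then (1 : ℚ) else 0) * (if Q then 1 else 0) = if P ∧ Q then 1 else 0 := by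
  split_ifs <;> simp_all

open Classical in
theorem sum_swap (f : Perm α → ℚ) :
    ∑ x, ∑ y ∈ Finset.univ.erase x, f (swap x y) = 2 * ∑ τ ∈ Finset.univ.filter (fun τ : Perm α => τ.IsSwap), f τ := by
  have e : ∑ x : α, ∑ y ∈ Finset.univ.erase x, f (swap x y) =
      ∑ q ∈ (Finset.univ : Finset (α × α)).filter (fun q => q.1 ≠ q.2), f (swap q.1 q.2) := by
    rw [Finset.sum_filter, Fintype.sum_prod_type]
    refine Finset.sum_congr rfl fun x _ => ?_
    rw [← Finset.sum_filter]
    refine Finset.sum_congr ?_ fun _ _ => rfl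
    ext y; simp [eq_comm]
  rw [e, ← Finset.sum_fiberwise_of_maps_to (t := Finset.univ.filter (fun τ : Perm α => τ.IsSwap))
    (g := fun q : α × α => swap q.1 q.2), Finset.mul_sum]
  · refine Finset.sum_congr rfl fun τ hτ => ?_
    rw [Finset.mem_filter] at hτ
    obtain ⟨a, b, hab, rfl⟩ := hτ.2
    have : Finset.filter (fun q : α × α => swap q.1 q.2 = swap a b)
        ((Finset.univ : Finset (α × α)).filter (fun q => q.1 ≠ q.2)) = {(a, b), (b, a)} := by
      ext ⟨x, y⟩
      simp only [Finset.mem_filter, Finset.mem_univ, true_and, Finset.mem_insert,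
        Finset.mem_singleton, Prod.mk.injEq]
      constructor
      · rintro ⟨hxy, h⟩
        have h1 : swap a b x = y := by rw [← h, swap_apply_left]
        by_cases hxa : x = a
        · subst hxa; rw [swap_apply_left] at h1; exact Or.inl ⟨rfl, h1.symm⟩
        · by_cases hxb : x = b
          · subst hxb; rw [swap_apply_right] at h1; exact Or.inr ⟨rfl, h1.symm⟩
          · rw [swap_apply_of_ne_of_ne hxa hxb] at h1; exact absurd h1 hxy
      · rintro (⟨rfl, rfl⟩ | ⟨rfl, rfl⟩)
        · exact ⟨hab, rfl⟩
        · exact ⟨hab.symm, swap_comm _ _⟩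
    rw [this, Finset.sum_pair, swap_comm b a]
    · ring
    · intro h; rw [Prod.mk.injEq] at h; exact hab h.1
  · intro q hq
    rw [Finset.mem_filter] at hq ⊢
    exact ⟨Finset.mem_univ _, q.1, q.2, hq.2, rfl⟩

open Classical in
theorem ind_join (r r' : Setoid α) (x y : α) :
    (if join r' x y = r then (1 : ℚ) else 0) = (if r x y ∧ r' = r then 1 else 0) +
      ∑ S ∈ Finset.univ.filter (fun S : Finset α => r x y ∧ x ∈ S ∧ y ∉ S ∧ S ⊆ cls r x),
        if r' = split r S then 1 else 0 := by
  by_cases hr : r' = r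
  · subst hr
    rw [Finset.sum_eq_zero, add_zero]
    · congr 1
      simp only [eq_iff_iff, and_true]
      exact ⟨fun h => h ▸ join_xy _ _ _, fun h => join_self h⟩
    · intro S hS
      rw [Finset.mem_filter] at hS
      rw [if_neg]
      intro h
      have : split r' S x y := by rw [← h]; exact hS.2.1
      exact hS.2.2.2.1 (this.2.1 hS.2.2.1)
  · rw [if_neg (fun h : r x y ∧ r' = r => hr h.2), zero_add]
    by_cases hj : join r' x y = r
    · rw [if_pos hj]
      have h := (join_fiber hr).1 hj
      symm
      rw [Finset.sum_eq_single (cls r' x)]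
      · rw [if_pos h.2.2.2]
      · intro S hS hne
        rw [Finset.mem_filter] at hS
        rw [if_neg]
        intro h'
        apply hne
        rw [h', cls_split hS.2.2.2.2 hS.2.2.1]
      · intro hn
        exfalso
        apply hn
        rw [Finset.mem_filter]
        exact ⟨Finset.mem_univ _, h.1, self_mem_cls _ _, fun h' => h.2.1 (mem_cls.1 h'), h.2.2.1⟩
    · rw [if_neg hj]
      symm
      apply Finset.sum_eq_zero
      intro S hS
      rw [Finset.mem_filter] at hS
      rw [if_neg]
      rintro rfl
      exact hj (join_split hS.2.1 hS.2.2.2.2 hS.2.2.1 hS.2.2.2.1)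

open Classical in
/-- contribution of one pair -/
noncomputable def MM (m : ℕ) (r : Setoid α) (σ : Perm α) (x y : α) : ℚ :=
  (if r x y then N m r (swap x y * σ) else 0) +
    ∑ S ∈ Finset.univ.filter (fun S : Finset α => r x y ∧ x ∈ S ∧ y ∉ S ∧ S ⊆ cls r x),
      N m (split r S) (swap x y * σ)

theorem N_rec (m : ℕ) (r : Setoid α) (σ : Perm α) :
    2 * N (m + 1) r σ = ∑ x, ∑ y ∈ Finset.univ.erase x, MM m r σ x y := by
  classical
  have e : N (m + 1) r σ = ∑ τ ∈ Finset.univ.filter (fun τ : Perm α => τ.IsSwap),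
      ∑ t : Fin m → Perm α, if (∀ i, (t i).IsSwap) ∧ (List.ofFn t).prod = τ⁻¹ * σ ∧
        orb (insert τ (Set.range t)) = r then 1 else 0 := by
    rw [N, ← (Fin.consEquiv (fun _ : Fin (m + 1) => Perm α)).sum_comp, Fintype.sum_prod_type,
      Finset.sum_filter]
    refine Finset.sum_congr rfl fun τ _ => ?_
    by_cases hτ : τ.IsSwap
    · rw [if_pos hτ]
      refine Finset.sum_congr rfl fun t _ => ?_
      congr 1
      simp only [Fin.consEquiv, Equiv.coe_fn_mk, Fin.forall_fin_succ, Fin.cons_zero, Fin.cons_succ,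
        List.ofFn_succ, List.prod_cons, Fin.range_cons, hτ, true_and, eq_inv_mul_iff_mul_eq]
    · rw [if_neg hτ]
      apply Finset.sum_eq_zero
      intro t _
      rw [if_neg]
      intro h
      exact hτ (h.1 0)
  rw [e, ← sum_swap]
  refine Finset.sum_congr rfl fun x _ => Finset.sum_congr rfl fun y _ => ?_
  rw [swap_inv]
  have : ∀ t : Fin m → Perm α, (if (∀ i, (t i).IsSwap) ∧ (List.ofFn t).prod = swap x y * σ ∧
        orb (insert (swap x y) (Set.range t)) = r then (1 : ℚ) else 0) =
      (if (∀ i, (t i).IsSwap) ∧ (List.ofFn t).prod = swap x y * σ then 1 else 0) *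
        (if join (orb (Set.range t)) x y = r then 1 else 0) := by
    intro t
    simp only [orb_insert, ind_mul, and_assoc]
  rw [Finset.sum_congr rfl fun t _ => this t]
  simp only [ind_join, mul_add, Finset.sum_add_distrib, Finset.mul_sum]
  rw [MM, Finset.sum_comm]
  congr 1
  · split_ifs with h
    · rw [N]
      refine Finset.sum_congr rfl fun t _ => ?_
      simp only [ind_mul, and_assoc, h, true_and]
    · simp [h]
  · refine Finset.sum_congr rfl fun S _ => ?_
    rw [N]
    refine Finset.sum_congr rfl fun t _ => ?_
    simp only [ind_mul, and_assoc]

theorem card_cl_join {s : Setoid α} {x y : α} (h : ¬ s x y) :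
    (cl s).card = (cl (join s x y)).card + 1 := by
  have := card_cl_split (cls_mem_cl (join s x y) x) (cls_sub (le_join s x y) x) ⟨x, self_mem_cls s x⟩
    (by rw [cls_join_sdiff h]; exact ⟨y, self_mem_cls s y⟩)
  rwa [split_join h] at this

theorem cyc_same {σ : Perm α} {x y : α} (hxy : x ≠ y) (h : cyc σ x y) :
    ¬ cyc (swap x y * σ) x y ∧ join (cyc (swap x y * σ)) x y = cyc σ := by
  obtain ⟨p, hp, hx, hmin⟩ := exists_per σ x
  have h' := h
  rw [← mem_cls, cls_cyc hp hx] at h'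
  simp only [Finset.mem_image, Finset.mem_range] at h'
  obtain ⟨k, hk, rfl⟩ := h'
  have hk0 : 0 < k := by
    rcases Nat.eq_zero_or_pos k with rfl | h0
    · exact absurd rfl hxy
    · exact h0
  obtain ⟨_, c2, c3, c4⟩ := cyc_cut hmin hk0 hk
  refine ⟨c2, ?_⟩
  rw [c4]
  exact join_split h c3 (self_mem_cls _ _) (fun h' => c2 (mem_cls.1 h'))

theorem card_cl_le {s r : Setoid α} (h : s ≤ r) : (cl r).card ≤ (cl s).card := by
  rw [← card_cl_KK h, Finset.card_eq_sum_ones]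
  refine Finset.sum_le_sum fun B hB => ?_
  obtain ⟨b, hb⟩ := cl_nonempty hB
  exact Finset.card_pos.2 ⟨_, cls_mem_KK (sat_of_le h hB) hb⟩

theorem cls_bot (x : α) : cls (⊥ : Setoid α) x = {x} := by
  ext z; rw [mem_cls, Setoid.bot_def, Finset.mem_singleton]; exact eq_comm

theorem eq_bot_of_card {r : Setoid α} (h : (cl r).card = Fintype.card α) : r = ⊥ := by
  have hinj : Function.Injective (cls r) := by
    have := (Finset.card_image_iff (s := (Finset.univ : Finset α)) (f := cls r)).1 h
    intro a b hab
    exact this (by simp) (by simp) hab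
  rw [eq_bot_iff]
  intro a b hab
  exact hinj (cls_eq hab)

theorem W_bot : W (⊥ : Setoid α) ⊥ = 1 := by
  have hc : ∀ B ∈ cl (⊥ : Setoid α), B.card = 1 := by
    intro B hB
    obtain ⟨x, rfl⟩ := mem_cl_iff.1 hB
    rw [cls_bot, Finset.card_singleton]
  rw [W, Finset.prod_eq_one, Finset.prod_eq_one, one_mul]
  · intro C hC
    rw [hc C hC]; simp [phi, A]
  · intro B hB
    rw [hc B hB]; simp

theorem cyc_one : cyc (1 : Perm α) = ⊥ := by
  rw [eq_bot_iff, cyc_le_iff]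
  intro a; rfl

theorem main (m : ℕ) : ∀ (r : Setoid α) (σ : Perm α), cyc σ ≤ r →
    (m : ℤ) ≤ (Fintype.card α : ℤ) + (cl (cyc σ)).card - 2 * (cl r).card →
    N m r σ = (if (m : ℤ) = (Fintype.card α : ℤ) + (cl (cyc σ)).card - 2 * (cl r).card
      then (m.factorial : ℚ) else 0) * W r (cyc σ) := by
  classical
  induction m with
  | zero =>
    intro r σ h hm
    have horb : ∀ t : Fin 0 → Perm α, orb (Set.range t) = ⊥ := by
      intro t
      rw [eq_bot_iff, orb_le_iff]
      rintro g ⟨i, _⟩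
      exact i.elim0
    have hN : N 0 r σ = if 1 = σ ∧ ⊥ = r then 1 else 0 := by
      rw [N, Fintype.sum_unique, horb]
      congr 1
      simp
    rw [hN]
    have hn : (cl r).card ≤ Fintype.card α := Finset.card_image_le
    have hle := card_cl_le h
    split_ifs with h1 h2 h2
    · obtain ⟨rfl, rfl⟩ := h1
      rw [cyc_one, W_bot]; simp
    · exfalso
      obtain ⟨rfl, rfl⟩ := h1
      apply h2
      rw [cyc_one]
      have : (cl (⊥ : Setoid α)).card = Fintype.card α := by
        refine Finset.card_image_iff.2 ?_
        intro a _ b _ hab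
        rw [cls_bot, cls_bot] at hab
        simpa using hab
      rw [this]; push_cast; ring
    · exfalso
      apply h1
      push_cast at h2
      have : (cl r).card = Fintype.card α := by omega
      have hr := eq_bot_of_card this
      refine ⟨?_, hr.symm⟩
      ext a
      have := cyc_le_iff.1 h a
      rw [hr] at this
      exact this
    · simp
  | succ m ih =>
    intro r σ h hm
    have hM : ∀ x y : α, x ≠ y → MM m r σ x y = (if ((m + 1 : ℕ) : ℤ) = (Fintype.card α : ℤ) + (cl (cyc σ)).card - 2 * (cl r).card
      then (m.factorial : ℚ) else 0) * TT r σ x y := by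
      intro x y hxy
      by_cases hr : r x y
      swap
      · have hs : ¬ cyc σ x y := fun h' => hr (h h')
        rw [MM, TT, if_neg hr, if_neg hs, if_neg hr]
        simp [hr]
      by_cases hs : cyc σ x y
      · obtain ⟨c1, c2⟩ := cyc_same hxy hs
        have hc := card_cl_join c1
        rw [c2] at hc
        have hle : cyc (swap x y * σ) ≤ r := by
          refine le_trans ?_ h
          rw [← c2]; exact le_join _ _ _
        rw [MM, TT, if_pos hr, if_pos hs, ih r _ hle (by rw [hc]; push_cast at hm ⊢; linarith),
          if_neg (by rw [hc]; push_cast at hm ⊢; intro h'; linarith), zero_mul, zero_add,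
          Finset.mul_sum]
        symm
        refine Finset.sum_subset_zero_on_sdiff ?_ ?_ ?_
        · intro S hS
          rw [Finset.mem_filter] at hS ⊢
          exact ⟨hS.1, hr, hS.2.1, hS.2.2.1, hS.2.2.2.1⟩
        · intro S hS
          rw [Finset.mem_sdiff, Finset.mem_filter, Finset.mem_filter] at hS
          apply N_zero
          intro h'
          exact hS.2 ⟨Finset.mem_univ _, hS.1.2.2.1, hS.1.2.2.2.1, hS.1.2.2.2.2, h'⟩
        · intro S hS
          rw [Finset.mem_filter] at hS
          obtain ⟨_, hxS, hyS, hSr, hle2⟩ := hS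
          have hc2 := card_cl_split (cls_mem_cl r x) hSr ⟨x, hxS⟩
            ⟨y, Finset.mem_sdiff.2 ⟨mem_cls.2 hr, hyS⟩⟩
          rw [ih _ _ hle2 (by rw [hc, hc2]; push_cast at hm ⊢; linarith)]
          congr 2
          rw [hc, hc2, eq_iff_iff]
          push_cast
          constructor <;> intro h' <;> linarith
      · have hj := cyc_join hs
        have hc := card_cl_join hs
        have hle : cyc (swap x y * σ) ≤ r := by rw [hj]; exact join_le h hr
        rw [MM, TT, if_pos hr, if_neg hs, if_pos hr, Finset.sum_eq_zero, add_zero,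
          ih r _ hle (by rw [hj]; rw [hc] at hm; push_cast at hm ⊢; linarith)]
        · congr 2
          rw [hj, hc, eq_iff_iff]
          push_cast
          constructor <;> intro h' <;> linarith
        · intro S hS
          rw [Finset.mem_filter] at hS
          apply N_zero
          intro h'
          have h2 : split r S x y := h' (by rw [hj]; exact join_xy _ _ _)
          exact hS.2.2.2.1 (h2.2.1 hS.2.2.1)
    have h2 := N_rec m r σ
    rw [Finset.sum_congr rfl fun x _ => Finset.sum_congr rfl fun y hy =>
      hM x y (Finset.ne_of_mem_erase hy).symm] at h2
    simp only [← Finset.mul_sum] at h2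
    rw [step h] at h2
    split_ifs at h2 ⊢ with hq
    · have hq' : ((m + 1 : ℕ) : ℚ) = (Fintype.card α : ℚ) + (cl (cyc σ)).card - 2 * (cl r).card := by
        exact_mod_cast congrArg (Int.cast : ℤ → ℚ) hq
      rw [← hq'] at h2
      rw [Nat.factorial_succ, Nat.cast_mul]
      linarith
    · linarith

end HZ

namespace HZ

set_option linter.unusedSectionVars false

variable {α : Type*} [Fintype α] [DecidableEq α]

theorem cl_cyc (ρ : Perm α) : cl (cyc ρ) =
    (ρ.cycleFactorsFinset.image Perm.support) ∪ (Finset.univ \ ρ.support).image (fun x => {x}) := by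
  have hcls : ∀ x ∈ ρ.support, cls (cyc ρ) x = (ρ.cycleOf x).support := by
    intro x hx
    ext z
    rw [mem_cls, Perm.mem_support_cycleOf_iff]
    exact ⟨fun h => ⟨h, hx⟩, fun h => h.1⟩
  have hcls' : ∀ x ∉ ρ.support, cls (cyc ρ) x = {x} := by
    intro x hx
    rw [Perm.mem_support, not_not] at hx
    rw [cls_cyc (p := 1) one_pos (by simpa using hx)]
    simp
  ext C
  rw [mem_cl_iff, Finset.mem_union, Finset.mem_image, Finset.mem_image]
  constructor
  · rintro ⟨x, rfl⟩
    by_cases hx : x ∈ ρ.support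
    · left
      exact ⟨ρ.cycleOf x, Perm.cycleOf_mem_cycleFactorsFinset_iff.2 hx, (hcls x hx).symm⟩
    · right
      exact ⟨x, by simpa using hx, (hcls' x hx).symm⟩
  · rintro (⟨c, hc, rfl⟩ | ⟨x, hx, rfl⟩)
    · have hcc := (Perm.mem_cycleFactorsFinset_iff.1 hc).1
      obtain ⟨x, hx⟩ := hcc.nonempty_support
      have e := Perm.cycle_is_cycleOf hx hc
      have hxs : x ∈ ρ.support := by
        rw [← Perm.cycleOf_mem_cycleFactorsFinset_iff, ← e]; exact hc
      exact ⟨x, by rw [hcls x hxs, ← e]⟩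
    · exact ⟨x, (hcls' x (by simpa using hx)).symm⟩

theorem prod_cl_cyc (ρ : Perm α) (F : ℕ → ℚ) : ∏ C ∈ cl (cyc ρ), F C.card =
    (ρ.cycleType.map F).prod * F 1 ^ (Fintype.card α - ρ.support.card) := by
  rw [cl_cyc, Finset.prod_union, Finset.prod_image, Finset.prod_image]
  · congr 1
    · rw [Perm.cycleType_def, Multiset.map_map]; rfl
    · simp only [Finset.card_singleton, Finset.prod_const]
      rw [Finset.card_sdiff_of_subset (Finset.subset_univ _), Finset.card_univ]
  · intro a _ b _ h
    simpa using h
  · intro a ha b hb h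
    obtain ⟨x, hx⟩ := (Perm.mem_cycleFactorsFinset_iff.1 ha).1.nonempty_support
    rw [Perm.cycle_is_cycleOf hx ha, Perm.cycle_is_cycleOf (h ▸ hx) hb]
  · rw [Finset.disjoint_left]
    intro C hC hC'
    rw [Finset.mem_image] at hC hC'
    obtain ⟨c, hc, rfl⟩ := hC
    obtain ⟨x, _, hx⟩ := hC'
    have := (Perm.mem_cycleFactorsFinset_iff.1 hc).1.two_le_card_support
    rw [← hx, Finset.card_singleton] at this
    omega

theorem type23 {n : ℕ} (hn : 5 ≤ n) {ρ : Perm (Fin n)} (h : ρ.cycleType = {2, 3}) :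
    (cl (cyc ρ)).card = n - 3 ∧ ∏ C ∈ cl (cyc ρ), phi C.card = 54 := by
  have hs : ρ.support.card = 5 := by
    rw [← Perm.sum_cycleType, h]; rfl
  constructor
  · have := prod_cl_cyc ρ (fun _ => 2)
    rw [h, hs, Fintype.card_fin] at this
    simp only [Finset.prod_const, Multiset.insert_eq_cons, Multiset.map_cons, Multiset.map_singleton,
      Multiset.prod_cons, Multiset.prod_singleton] at this
    have h2 : (2 : ℚ) ^ (cl (cyc ρ)).card = 2 ^ (n - 3) := by
      rw [this, show n - 3 = 2 + (n - 5) by omega, pow_add]; norm_num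
    exact pow_right_injective₀ (by norm_num) (by norm_num) h2
  · rw [prod_cl_cyc, h]
    simp [phi, A, Nat.factorial]
    norm_num

theorem W_top {n : ℕ} (hn : 5 ≤ n) {ρ : Perm (Fin n)} (h : ρ.cycleType = {2, 3}) :
    W ⊤ (cyc ρ) = (n : ℚ) ^ ((n : ℤ) - 6) * 54 ∧ (cl (⊤ : Setoid (Fin n))).card = 1 := by
  have hc : cl (⊤ : Setoid (Fin n)) = {Finset.univ} := by
    ext B
    have : ∀ x, cls (⊤ : Setoid (Fin n)) x = Finset.univ := by
      intro x; ext y; rw [mem_cls]; simp [Setoid.top_def]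
    rw [mem_cl_iff, Finset.mem_singleton]
    constructor
    · rintro ⟨x, rfl⟩; exact this x
    · rintro rfl; exact ⟨⟨0, by omega⟩, (this _).symm⟩
  have hk : KK (cyc ρ) Finset.univ = cl (cyc ρ) := by ext C; simp [mem_KK]
  refine ⟨?_, by rw [hc]; rfl⟩
  rw [W, (type23 hn h).2, hc, Finset.prod_singleton, hk, (type23 hn h).1, Finset.card_univ, Fintype.card_fin]
  congr 2
  push_cast [show 3 ≤ n by omega]
  ring

theorem N_val {n : ℕ} (hn : 5 ≤ n) {ρ : Perm (Fin n)} (h : ρ.cycleType = {2, 3}) :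
    N (2 * n - 5) ⊤ ρ = ((2 * n - 5).factorial : ℚ) * ((n : ℚ) ^ ((n : ℤ) - 6) * 54) := by
  have e : ((2 * n - 5 : ℕ) : ℤ) = (Fintype.card (Fin n) : ℤ) + (cl (cyc ρ)).card -
      2 * (cl (⊤ : Setoid (Fin n))).card := by
    rw [(W_top hn h).2, (type23 hn h).1, Fintype.card_fin]
    omega
  rw [main _ ⊤ ρ le_top e.le, if_pos e, (W_top hn h).1]

theorem closure_eq {β : Type*} [Fintype β] [DecidableEq β] {m : ℕ} {σ : Perm β} {t : Fin m → Perm β}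
    (h : (List.ofFn t).prod = σ⁻¹) :
    Subgroup.closure ({σ} ∪ Set.range t) = Subgroup.closure (Set.range t) := by
  apply le_antisymm
  · rw [Subgroup.closure_le]
    rintro g (hg | hg)
    · rw [Set.mem_singleton_iff] at hg
      subst hg
      have := prod_mem t
      rw [h] at this
      simpa using this
    · exact Subgroup.subset_closure hg
  · exact Subgroup.closure_mono Set.subset_union_right

theorem count (n : ℕ) (hn : 5 ≤ n) :
    ((Finset.univ.filter (fun g : Perm (Fin n) => g.cycleType = {2, 3})).card : ℚ) * 6 * (n - 5).factorial
      = n.factorial := by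
  have := Perm.card_of_cycleType_mul_eq (Fin n) {2, 3}
  rw [Fintype.card_fin, if_pos] at this
  · have e : ∏ k ∈ ({2, 3} : Multiset ℕ).toFinset, (({2, 3} : Multiset ℕ).count k).factorial = 1 := by decide
    rw [e] at this
    have e2 : ({2, 3} : Multiset ℕ).sum = 5 := rfl
    have e3 : ({2, 3} : Multiset ℕ).prod = 6 := rfl
    rw [e2, e3] at this
    rw [← this]
    push_cast
    ring
  · refine ⟨hn, ?_⟩
    decide

end HZ

theorem hurwitz_number_1_1_2_1 (n : ℕ) (hn : 5 ≤ n) :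
    (Nat.card {p : Perm (Fin n) × (Fin (2 * n - 5) → Perm (Fin n)) //
        p.1.cycleType = {2, 3} ∧
        (∀ i, (p.2 i).IsSwap) ∧
        p.1 * (List.ofFn p.2).prod = 1 ∧
        (∀ x y : Fin n, ∃ g ∈ Subgroup.closure ({p.1} ∪ Set.range p.2),
          g x = y)} : ℚ) =
      (n.factorial : ℚ) * (9) *
        (((2 * n - 5).factorial : ℚ) / ((n - 5).factorial : ℚ)) *
        (n : ℚ) ^ ((n : ℤ) - 6) := by
  classical
  rw [Nat.card_eq_fintype_card, Fintype.card_subtype, Finset.card_filter, Nat.cast_sum,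
    Fintype.sum_prod_type]
  have key : ∀ σ : Perm (Fin n), (∑ t : Fin (2 * n - 5) → Perm (Fin n),
      ((if σ.cycleType = {2, 3} ∧ (∀ i, (t i).IsSwap) ∧ σ * (List.ofFn t).prod = 1 ∧
        (∀ x y : Fin n, ∃ g ∈ Subgroup.closure ({σ} ∪ Set.range t), g x = y) then 1 else 0 : ℕ) : ℚ)) =
      if σ.cycleType = {2, 3} then ((2 * n - 5).factorial : ℚ) * ((n : ℚ) ^ ((n : ℤ) - 6) * 54) else 0 := by
    intro σ
    split_ifs with h
    · rw [← HZ.N_val hn (ρ := σ⁻¹) (by rw [Perm.cycleType_inv, h]), HZ.N]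
      refine Finset.sum_congr rfl fun t _ => ?_
      rw [Nat.cast_ite, Nat.cast_one, Nat.cast_zero]
      congr 1
      rw [eq_iff_iff]
      simp only [h, true_and]
      refine and_congr_right fun _ => ?_
      rw [mul_eq_one_iff_eq_inv']
      refine and_congr_right fun h2 => ?_
      rw [HZ.closure_eq h2, eq_top_iff]
      exact ⟨fun h3 x y _ => h3 x y, fun h3 x y => h3 (x := x) (y := y) trivial⟩
    · apply Finset.sum_eq_zero
      intro t _
      rw [if_neg (fun h' => h h'.1)]
      rfl
  rw [Finset.sum_congr rfl fun σ _ => key σ, ← Finset.sum_filter, Finset.sum_const, nsmul_eq_mul]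
  rw [← HZ.count n hn]
  have : ((n - 5).factorial : ℚ) ≠ 0 := by exact_mod_cast Nat.factorial_ne_zero _
  field_simp
  ring
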